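/- arXiv:2004.13884 — 2 statements merged into one kernel-verified Lean document; each statement's English description precedes it below -/
import Mathlib

section
/- Let C ⊆ ℝⁿ be the convex polyhedron determined by vectors x*_1,…,x*_s ∈ ℝⁿ and scalars c_1,…,c_s, let x ∈ C be a point at which PLICQ holds, let u ∈ ℝ^d, let g : ℝⁿ×ℝ^d → ℝⁿ be continuously differentiable on a neighborhood of (x,u), let F(x,u) := N(x;C) + g(x,u), and let ω ∈ g(x,u) + N(x;C). Then for every w ∈ ℝⁿ, every z ∈ D*F((x,u),ω)(w) has the form z = (∇ₓg(x,u)ᵀ w + Σ_{j∈I₀(w)∪I_>(w)} γ_j x*_j, ∇ᵤg(x,u)ᵀ w) for some real numbers γ_j with γ_j ≥ 0 for j ∈ I_>(w), where ∇ₓg(x,u)ᵀ and ∇ᵤg(x,u)ᵀ denote the adjoints (transposes) of the partial Jacobians of g at (x,u), and I₀(w), I_>(w) are taken relative to the point x. -/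
open Filter Topology Set MeasureTheory
open scoped RealInnerProductSpace

noncomputable section

/-- The limiting (Mordukhovich) normal cone to a set `Ω` at `z`. -/
def limNormal {E : Type*} [NormedAddCommGroup E] [NormedSpace ℝ E]
    (Ω : Set E) (z : E) : Set E :=
  {v | ∃ (zk vk : ℕ → E) (tk : ℕ → ℝ) (yk : ℕ → E),
      Tendsto zk atTop (𝓝 z) ∧ Tendsto vk atTop (𝓝 v) ∧
      (∀ k, 0 ≤ tk k) ∧ (∀ k, yk k ∈ Ω) ∧
      (∀ k, ‖zk k - yk k‖ = Metric.infDist (zk k) Ω) ∧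
      (∀ k, vk k = tk k • (zk k - yk k))}

/-- The convex normal cone to a convex set `C` at `x` (empty if `x ∉ C`). -/
def convNormal {E : Type*} [NormedAddCommGroup E] [InnerProductSpace ℝ E]
    (C : Set E) (x : E) : Set E :=
  {v | x ∈ C ∧ ∀ y ∈ C, ⟪v, y - x⟫ ≤ 0}

/-- Pairing of two components into the `L²` product. -/
def pmk {E F : Type*} [NormedAddCommGroup E] [NormedAddCommGroup F]
    (a : E) (b : F) : WithLp 2 (E × F) :=
  (WithLp.equiv 2 (E × F)).symm (a, b)

/-- First component of an `L²` product element. -/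
def pfst {E F : Type*} [NormedAddCommGroup E] [NormedAddCommGroup F]
    (q : WithLp 2 (E × F)) : E := ((WithLp.equiv 2 (E × F)) q).1

/-- Second component of an `L²` product element. -/
def psnd {E F : Type*} [NormedAddCommGroup E] [NormedAddCommGroup F]
    (q : WithLp 2 (E × F)) : F := ((WithLp.equiv 2 (E × F)) q).2

/-- The coderivative of a set-valued map `G` at `(z, y) ∈ gph G`, applied to `w`. -/
def coderiv {E F : Type*} [NormedAddCommGroup E] [NormedSpace ℝ E]
    [NormedAddCommGroup F] [NormedSpace ℝ F]
    (G : E → Set F) (z : E) (y : F) (w : F) : Set E :=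
  {v | pmk v (-w) ∈ limNormal {q : WithLp 2 (E × F) | psnd q ∈ G (pfst q)} (pmk z y)}

/-- The limiting subdifferential of `h : E → ℝ` at `z`, via limiting normals to the epigraph. -/
def limSubdiff {E : Type*} [NormedAddCommGroup E] [NormedSpace ℝ E]
    (h : E → ℝ) (z : E) : Set E :=
  {v | pmk v (-1 : ℝ) ∈ limNormal {q : WithLp 2 (E × ℝ) | h (pfst q) ≤ psnd q} (pmk z (h z))}
/-- `Euc n` is the Euclidean space `ℝⁿ`. -/
abbrev Euc (n : ℕ) := EuclideanSpace ℝ (Fin n)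


theorem farkas_aux {E ι : Type*} [NormedAddCommGroup E] [InnerProductSpace ℝ E] [DecidableEq ι]
    (T : Finset ι) : ∀ (a : ι → E) (b : E),
    (∀ y, (∀ j ∈ T, ⟪a j, y⟫ ≤ 0) → ⟪b, y⟫ ≤ 0) →
    ∃ l : ι → ℝ, (∀ j, 0 ≤ l j) ∧ (∀ j, j ∉ T → l j = 0) ∧ b = ∑ j ∈ T, l j • a j := by
  induction T using Finset.induction_on with
  | empty =>
    intro a b h
    refine ⟨fun _ => 0, by simp, by simp, ?_⟩
    have := h b (by simp)
    simpa using this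
  | insert m T hm ih =>
    intro a b h
    by_cases hb : ∀ y, (∀ j ∈ T, ⟪a j, y⟫ ≤ 0) → ⟪b, y⟫ ≤ 0
    · obtain ⟨l, h1, h2, h3⟩ := ih a b hb
      refine ⟨l, h1, fun j hj => h2 j (fun h => hj (Finset.mem_insert_of_mem h)), ?_⟩
      rw [Finset.sum_insert hm, h2 m hm, h3]; simp
    · push Not at hb
      obtain ⟨y0, hy0, hby0⟩ := hb
      have ham : 0 < ⟪a m, y0⟫ := by
        by_contra hcon
        push Not at hcon
        have := h y0 (by
          intro j hj
          rcases Finset.mem_insert.1 hj with rfl | hj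
          · exact hcon
          · exact hy0 j hj)
        linarith
      set r := ⟪a m, y0⟫ with hr
      obtain ⟨l, h1, h2, h3⟩ := ih (fun j => a j - (⟪a j, y0⟫ / r) • a m)
        (b - (⟪b, y0⟫ / r) • a m) (by
          intro y hy
          have := h (y - (⟪a m, y⟫ / r) • y0) (by
            intro j hj
            rcases Finset.mem_insert.1 hj with rfl | hj
            · rw [inner_sub_right, inner_smul_right, ← hr]
              field_simp; simp
            · have := hy j hj
              simp only [inner_sub_left, inner_smul_left, inner_sub_right, inner_smul_right,
                RCLike.conj_to_real] at this ⊢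
              calc _ = _ := by ring
                _ ≤ 0 := this)
          simp only [inner_sub_left, inner_smul_left, inner_sub_right, inner_smul_right,
                RCLike.conj_to_real] at this ⊢
          calc _ = _ := by ring
            _ ≤ 0 := this)
      refine ⟨fun j => if j = m then ⟪b, y0⟫ / r - ∑ i ∈ T, l i * (⟪a i, y0⟫ / r) else l j,
        ?_, ?_, ?_⟩
      · intro j
        dsimp only
        split_ifs
        · have : ∑ i ∈ T, l i * (⟪a i, y0⟫ / r) ≤ 0 :=
            Finset.sum_nonpos fun i hi => mul_nonpos_of_nonneg_of_nonpos (h1 i)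
              (div_nonpos_of_nonpos_of_nonneg (hy0 i hi) ham.le)
          have := div_pos hby0 ham
          linarith
        · exact h1 j
      · intro j hj
        rw [Finset.mem_insert, not_or] at hj
        simp [hj.1, h2 j hj.2]
      · rw [Finset.sum_insert hm]
        have : ∑ j ∈ T, (if j = m then ⟪b, y0⟫ / r - ∑ i ∈ T, l i * (⟪a i, y0⟫ / r) else l j) • a j
            = ∑ j ∈ T, l j • a j := Finset.sum_congr rfl fun j hj => by
          rw [if_neg (fun h : j = m => hm (h ▸ hj))]
        rw [this]
        simp only [if_true]
        rw [sub_smul, Finset.sum_smul]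
        simp only [smul_sub, Finset.sum_sub_distrib, smul_smul] at h3
        rw [sub_eq_iff_eq_add] at h3
        refine h3.trans ?_
        abel

theorem farkas_signed {E : Type*} [NormedAddCommGroup E] [InnerProductSpace ℝ E] {s : ℕ}
    (I J : Finset (Fin s)) (xs : Fin s → E) (b : E)
    (h : ∀ y, (∀ j ∈ I, ⟪xs j, y⟫ ≤ 0) → (∀ j ∈ J, 0 ≤ ⟪xs j, y⟫) → ⟪b, y⟫ ≤ 0) :
    ∃ l : Fin s → ℝ, (∀ j, j ∉ J → 0 ≤ l j) ∧ (∀ j, j ∉ I → j ∉ J → l j = 0) ∧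
      b = ∑ j, l j • xs j := by
  obtain ⟨l, h1, h2, h3⟩ := farkas_aux (I.disjSum J) (Sum.elim xs (fun j => - xs j)) b (by
    intro y hy
    refine h y (fun j hj => by simpa using hy (Sum.inl j) (by simpa using hj)) fun j hj => ?_
    have := hy (Sum.inr j) (by simpa using hj)
    simpa using this)
  refine ⟨fun j => l (Sum.inl j) - l (Sum.inr j), ?_, ?_, ?_⟩
  · intro j hj
    have := h2 (Sum.inr j) (by simpa using hj)
    simp [this, h1]
  · intro j hj hj'
    have := h2 (Sum.inr j) (by simpa using hj')
    have := h2 (Sum.inl j) (by simpa using hj)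
    simp [*]
  · rw [h3, Finset.sum_subset (Finset.subset_univ _)
      (fun j _ hj => by rw [h2 j hj, zero_smul]), Fintype.sum_sum_type]
    simp only [Sum.elim_inl, Sum.elim_inr, smul_neg, Finset.sum_neg_distrib, sub_smul,
      Finset.sum_sub_distrib]
    rw [← sub_eq_add_neg]

theorem prox_ineq {E : Type*} [NormedAddCommGroup E] [InnerProductSpace ℝ E]
    {Ω : Set E} {z y : E} (hzy : ‖z - y‖ = Metric.infDist z Ω) {t : ℝ} (ht : 0 ≤ t)
    {q : ℝ → E} {q' : E} (q0 : q 0 = y) (hq : HasDerivAt q q' 0)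
    (hqΩ : ∀ᶠ τ in 𝓝[>] (0 : ℝ), q τ ∈ Ω) : ⟪t • (z - y), q'⟫ ≤ 0 := by
  have hf : HasDerivAt (fun τ => ‖z - q τ‖ ^ 2) (2 * ⟪z - q 0, -q'⟫) 0 := by
    have := (hq.const_sub z).norm_sq
    simpa using this
  have h1 := hf.tendsto_slope_zero_right
  have h2 : 0 ≤ 2 * ⟪z - q 0, -q'⟫ := by
    refine ge_of_tendsto h1 ?_
    filter_upwards [hqΩ, self_mem_nhdsWithin] with τ h hτ
    have h3 : ‖z - q 0‖ ≤ ‖z - q τ‖ := by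
      rw [q0, hzy, ← dist_eq_norm]
      exact Metric.infDist_le_dist_of_mem h
    have h4 : (0 : ℝ) < τ := hτ
    have h5 : ‖z - q 0‖ ^ 2 ≤ ‖z - q τ‖ ^ 2 := by gcongr
    rw [zero_add, smul_eq_mul]
    exact mul_nonneg (by positivity) (by linarith)
  rw [q0, inner_neg_right] at h2
  rw [real_inner_smul_left]
  exact mul_nonpos_of_nonneg_of_nonpos ht (by linarith)

theorem poly_move {E : Type*} [NormedAddCommGroup E] [InnerProductSpace ℝ E] {s : ℕ}
    (xs : Fin s → E) (c : Fin s → ℝ) (x h : E) (hx : ∀ j, ⟪xs j, x⟫ ≤ c j)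
    (hh : ∀ j, ⟪xs j, x⟫ = c j → ⟪xs j, h⟫ ≤ 0) :
    ∀ᶠ τ in 𝓝[>] (0 : ℝ), ∀ j, ⟪xs j, x + τ • h⟫ ≤ c j := by
  rw [Filter.eventually_all]
  intro j
  by_cases hj : ⟪xs j, x⟫ = c j
  · filter_upwards [self_mem_nhdsWithin] with τ hτ
    have h4 : (0 : ℝ) < τ := hτ
    rw [inner_add_right, inner_smul_right, hj]
    have := mul_nonpos_of_nonneg_of_nonpos h4.le (hh j hj)
    linarith
  · have hlt := lt_of_le_of_ne (hx j) hj
    have hc : Continuous fun τ : ℝ => ⟪xs j, x + τ • h⟫ := by fun_prop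
    have : ∀ᶠ τ in 𝓝 (0 : ℝ), ⟪xs j, x + τ • h⟫ < c j :=
      hc.continuousAt.eventually_lt continuousAt_const (by simpa using hlt)
    filter_upwards [nhdsWithin_le_nhds this] with τ hτ using hτ.le

theorem normal_repr {E : Type*} [NormedAddCommGroup E] [InnerProductSpace ℝ E] {s : ℕ}
    (xs : Fin s → E) (c : Fin s → ℝ) (x v : E)
    (hv : v ∈ convNormal {x | ∀ j, ⟪xs j, x⟫ ≤ c j} x) :
    ∃ l : Fin s → ℝ, (∀ j, 0 ≤ l j) ∧ (∀ j, ⟪xs j, x⟫ ≠ c j → l j = 0) ∧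
      v = ∑ j, l j • xs j := by
  classical
  obtain ⟨l, h1, h2, h3⟩ := farkas_signed (Finset.univ.filter fun j => ⟪xs j, x⟫ = c j) ∅ xs v (by
    intro y hy _
    have := (poly_move xs c x y hv.1 (fun j hj => hy j (by simpa using hj))).and
      self_mem_nhdsWithin
    obtain ⟨τ, h1, h2⟩ := this.exists
    have h4 : (0 : ℝ) < τ := h2
    have := hv.2 _ h1
    rw [add_sub_cancel_left, inner_smul_right] at this
    exact nonpos_of_mul_nonpos_right this h4)
  exact ⟨l, fun j => h1 j (by simp), fun j hj => h2 j (by simpa using hj) (by simp), h3⟩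

theorem normal_of_repr {E : Type*} [NormedAddCommGroup E] [InnerProductSpace ℝ E] {s : ℕ}
    (xs : Fin s → E) (c : Fin s → ℝ) (x : E) (hx : ∀ j, ⟪xs j, x⟫ ≤ c j) (l : Fin s → ℝ)
    (hl : ∀ j, 0 ≤ l j) (hl' : ∀ j, ⟪xs j, x⟫ ≠ c j → l j = 0) :
    ∑ j, l j • xs j ∈ convNormal {x | ∀ j, ⟪xs j, x⟫ ≤ c j} x := by
  refine ⟨hx, fun y hy => ?_⟩
  rw [sum_inner]
  refine Finset.sum_nonpos fun j _ => ?_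
  rw [real_inner_smul_left, inner_sub_right]
  by_cases hj : ⟪xs j, x⟫ = c j
  · exact mul_nonpos_of_nonneg_of_nonpos (hl j) (by have := hy j; linarith)
  · simp [hl' j hj]

theorem inner_pmk {E F : Type*} [NormedAddCommGroup E] [InnerProductSpace ℝ E]
    [NormedAddCommGroup F] [InnerProductSpace ℝ F] (v : WithLp 2 (E × F)) (a : E) (b : F) :
    ⟪v, pmk a b⟫ = ⟪pfst v, a⟫ + ⟪psnd v, b⟫ := rfl

theorem hasDerivAt_pmk {E F : Type*} [NormedAddCommGroup E] [InnerProductSpace ℝ E]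
    [NormedAddCommGroup F] [InnerProductSpace ℝ F] {f : ℝ → E} {h : ℝ → F} {f' : E} {h' : F}
    {t : ℝ} (hf : HasDerivAt f f' t) (hh : HasDerivAt h h' t) :
    HasDerivAt (fun τ => pmk (f τ) (h τ)) (pmk f' h') t :=
  ((WithLp.prodContinuousLinearEquiv 2 ℝ E F).symm.toContinuousLinearMap.hasFDerivAt).comp_hasDerivAt
    t (hf.prodMk hh)

theorem continuous_pfst {E F : Type*} [NormedAddCommGroup E] [InnerProductSpace ℝ E]
    [NormedAddCommGroup F] [InnerProductSpace ℝ F] :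
    Continuous (pfst : WithLp 2 (E × F) → E) :=
  continuous_fst.comp (WithLp.prodContinuousLinearEquiv 2 ℝ E F).continuous

theorem continuous_psnd {E F : Type*} [NormedAddCommGroup E] [InnerProductSpace ℝ E]
    [NormedAddCommGroup F] [InnerProductSpace ℝ F] :
    Continuous (psnd : WithLp 2 (E × F) → F) :=
  continuous_snd.comp (WithLp.prodContinuousLinearEquiv 2 ℝ E F).continuous

theorem hasDerivAt_line {E : Type*} [NormedAddCommGroup E] [InnerProductSpace ℝ E] (a b : E) :
    HasDerivAt (fun τ : ℝ => a + τ • b) b 0 := by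
  simpa using ((hasDerivAt_id (0 : ℝ)).smul_const b).const_add a

theorem graph_ineq_abs {P N : Type*} [NormedAddCommGroup P] [InnerProductSpace ℝ P]
    [NormedAddCommGroup N] [InnerProductSpace ℝ N] (g : P → N) (F : P → Set N)
    (zk yk : WithLp 2 (P × N))
    (hzy : ‖zk - yk‖ = Metric.infDist zk {q : WithLp 2 (P × N) | psnd q ∈ F (pfst q)})
    (t : ℝ) (ht : 0 ≤ t) (v : N)
    (hyk : psnd yk = v + g (pfst yk)) (hg : DifferentiableAt ℝ g (pfst yk))
    (e : P) (η : N)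
    (hev : ∀ᶠ τ in 𝓝[>] (0 : ℝ), v + τ • η + g (pfst yk + τ • e) ∈ F (pfst yk + τ • e)) :
    ⟪pfst (t • (zk - yk)), e⟫ +
      ⟪psnd (t • (zk - yk)), η + fderiv ℝ g (pfst yk) e⟫ ≤ 0 := by
  have hp : HasDerivAt (fun τ : ℝ => pfst yk + τ • e) e 0 := hasDerivAt_line _ _
  have hη : HasDerivAt (fun τ : ℝ => v + τ • η) η 0 := hasDerivAt_line _ _
  have hgd : HasDerivAt (fun τ : ℝ => g (pfst yk + τ • e)) (fderiv ℝ g (pfst yk) e) 0 := by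
    have h0 : HasFDerivAt g (fderiv ℝ g (pfst yk)) (pfst yk + (0 : ℝ) • e) := by
      rw [zero_smul, add_zero]; exact hg.hasFDerivAt
    exact h0.comp_hasDerivAt 0 hp
  have hq := hasDerivAt_pmk hp (hη.add hgd)
  rw [← inner_pmk]
  refine prox_ineq hzy ht ?_ hq ?_
  · simp only [zero_smul, add_zero, Pi.add_apply]
    rw [← hyk]; rfl
  · filter_upwards [hev] with τ hτ
    exact hτ

theorem graph_ineq {n d : ℕ} (C : Set (Euc n))
    (g : WithLp 2 (Euc n × Euc d) → Euc n)
    (F : WithLp 2 (Euc n × Euc d) → Set (Euc n))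
    (hF : ∀ p, F p = {ω | ∃ v ∈ convNormal C (pfst p), ω = v + g p})
    (zk yk : WithLp 2 (WithLp 2 (Euc n × Euc d) × Euc n))
    (hzy : ‖zk - yk‖ = Metric.infDist zk
      {q : WithLp 2 (WithLp 2 (Euc n × Euc d) × Euc n) | psnd q ∈ F (pfst q)})
    (t : ℝ) (ht : 0 ≤ t) (v : Euc n)
    (hyk : psnd yk = v + g (pfst yk)) (hg : DifferentiableAt ℝ g (pfst yk))
    (h : Euc n) (k : Euc d) (η : Euc n)
    (hev : ∀ᶠ τ in 𝓝[>] (0 : ℝ), v + τ • η ∈ convNormal C (pfst (pfst yk) + τ • h)) :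
    ⟪pfst (t • (zk - yk)), pmk h k⟫ +
      ⟪psnd (t • (zk - yk)), η + fderiv ℝ g (pfst yk) (pmk h k)⟫ ≤ 0 := by
  refine graph_ineq_abs g F zk yk hzy t ht v hyk hg (pmk h k) η ?_
  filter_upwards [hev] with τ hτ
  rw [hF]
  exact ⟨_, hτ, rfl⟩

/-- The conditions extracted at one point of the graph. -/
theorem point_data {n d s : ℕ} (xs : Fin s → Euc n) (c : Fin s → ℝ)
    (g : WithLp 2 (Euc n × Euc d) → Euc n)
    (F : WithLp 2 (Euc n × Euc d) → Set (Euc n))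
    (hF : ∀ p, F p = {ω | ∃ v ∈ convNormal {x | ∀ j, ⟪xs j, x⟫ ≤ c j} (pfst p), ω = v + g p})
    (zk yk : WithLp 2 (WithLp 2 (Euc n × Euc d) × Euc n))
    (hzy : ‖zk - yk‖ = Metric.infDist zk
      {q : WithLp 2 (WithLp 2 (Euc n × Euc d) × Euc n) | psnd q ∈ F (pfst q)})
    (t : ℝ) (ht : 0 ≤ t) (hyk : psnd yk ∈ F (pfst yk))
    (hg : DifferentiableAt ℝ g (pfst yk)) :
    ∃ IJ : Finset (Fin s) × Finset (Fin s), IJ.2 ⊆ IJ.1 ∧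
      (∀ j ∈ IJ.1, ⟪xs j, pfst (pfst yk)⟫ = c j) ∧
      (∀ j ∈ IJ.1, ⟪psnd (t • (zk - yk)), xs j⟫ ≤ 0) ∧
      (∀ j ∈ IJ.2, 0 ≤ ⟪psnd (t • (zk - yk)), xs j⟫) ∧
      (∀ k : Euc d, ⟪pfst (t • (zk - yk)), pmk 0 k⟫ +
        ⟪psnd (t • (zk - yk)), fderiv ℝ g (pfst yk) (pmk 0 k)⟫ ≤ 0) ∧
      (∀ h : Euc n, (∀ j ∈ IJ.1, ⟪xs j, h⟫ ≤ 0) → (∀ j ∈ IJ.2, 0 ≤ ⟪xs j, h⟫) →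
        ⟪pfst (t • (zk - yk)), pmk h (0 : Euc d)⟫ +
        ⟪psnd (t • (zk - yk)), fderiv ℝ g (pfst yk) (pmk h 0)⟫ ≤ 0) := by
  classical
  rw [hF] at hyk
  obtain ⟨v, hv, hyv⟩ := hyk
  obtain ⟨l, hl, hl', hvl⟩ := normal_repr xs c _ v hv
  have G := graph_ineq _ g F hF zk yk hzy t ht v hyv hg
  have move : ∀ j, ⟪xs j, pfst (pfst yk)⟫ = c j → ∀ r : ℝ, 0 ≤ l j + r →
      v + r • xs j ∈ convNormal {x | ∀ j, ⟪xs j, x⟫ ≤ c j} (pfst (pfst yk)) := by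
    intro j hj r hr
    have := normal_of_repr xs c (pfst (pfst yk)) hv.1 (fun i => l i + if i = j then r else 0)
      (by
        intro i
        split_ifs with hij
        · rw [hij]; exact hr
        · simpa using hl i)
      (by
        intro i hi
        have : i ≠ j := fun h => hi (h ▸ hj)
        simp [this, hl' i hi])
    simpa [add_smul, Finset.sum_add_distrib, ite_smul, ← hvl] using this
  refine ⟨(Finset.univ.filter fun j => ⟪xs j, pfst (pfst yk)⟫ = c j,
    Finset.univ.filter fun j => 0 < l j), ?_, ?_, ?_, ?_, ?_, ?_⟩
  · intro j hj
    have hj : 0 < l j := by simpa using hj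
    have : ⟪xs j, pfst (pfst yk)⟫ = c j := by
      by_contra hcon
      rw [hl' j hcon] at hj
      exact lt_irrefl _ hj
    simpa using this
  · intro j hj
    simpa using hj
  · intro j hj
    have hj : ⟪xs j, pfst (pfst yk)⟫ = c j := by simpa using hj
    have := G 0 0 (xs j) (by
      filter_upwards [self_mem_nhdsWithin] with τ hτ
      have h4 : (0 : ℝ) < τ := hτ
      rw [smul_zero, add_zero]
      exact move j hj τ (by have := hl j; linarith))
    have e : (pmk 0 0 : WithLp 2 (Euc n × Euc d)) = 0 := rfl
    simpa [e] using this
  · intro j hj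
    have hj : 0 < l j := by simpa using hj
    have hj' : ⟪xs j, pfst (pfst yk)⟫ = c j := by
      by_contra hcon
      rw [hl' j hcon] at hj
      exact lt_irrefl _ hj
    have := G 0 0 (-xs j) (by
      filter_upwards [Ioo_mem_nhdsGT hj] with τ hτ
      rw [smul_zero, add_zero, smul_neg, ← neg_smul]
      exact move j hj' (-τ) (by linarith [hτ.2]))
    have e : (pmk 0 0 : WithLp 2 (Euc n × Euc d)) = 0 := rfl
    simpa [e] using this
  · intro k
    have := G 0 k 0 (by simp [hv])
    simpa using this
  · intro h h1 h2
    have := G h 0 0 (by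
      filter_upwards [poly_move xs c (pfst (pfst yk)) h hv.1
        (fun j hj => h1 j (by simpa using hj))] with τ hτ
      refine ⟨hτ, fun y hy => ?_⟩
      have e : ⟪v, h⟫ = 0 := by
        rw [hvl, sum_inner]
        refine Finset.sum_eq_zero fun j _ => ?_
        rw [real_inner_smul_left]
        by_cases hj : 0 < l j
        · have hj' : ⟪xs j, pfst (pfst yk)⟫ = c j := by
            by_contra hcon
            rw [hl' j hcon] at hj
            exact lt_irrefl _ hj
          have := h1 j (by simpa using hj')
          have := h2 j (by simpa using hj)
          have : ⟪xs j, h⟫ = 0 := by linarith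
          rw [this, mul_zero]
        · have : l j = 0 := le_antisymm (not_lt.1 hj) (hl j)
          rw [this, zero_mul]
      have := hv.2 y hy
      rw [inner_sub_right] at this
      rw [smul_zero, add_zero, inner_sub_right, inner_add_right, inner_smul_right, e]
      linarith)
    simpa using this

/-- form of coderivative elements of `F(x,u) = N(x;C) + g(x,u)` for a
smooth perturbation `g` under PLICQ. -/
theorem statement2 (n d s : ℕ)
    (xs : Fin s → Euc n) (c : Fin s → ℝ)
    (C : Set (Euc n)) (hC : C = {x | ∀ j, ⟪xs j, x⟫ ≤ c j})
    (x : Euc n) (hx : x ∈ C)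
    (hPLICQ : ∀ α : Fin s → ℝ, (∀ j, 0 ≤ α j) →
      (∀ j, ⟪xs j, x⟫ ≠ c j → α j = 0) → (∑ j, α j • xs j) = 0 → ∀ j, α j = 0)
    (u : Euc d)
    (g : WithLp 2 (Euc n × Euc d) → Euc n)
    (V : Set (WithLp 2 (Euc n × Euc d))) (hV : V ∈ nhds (pmk x u))
    (hgC1 : ContDiffOn ℝ 1 g V)
    (F : WithLp 2 (Euc n × Euc d) → Set (Euc n))
    (hF : ∀ p, F p = {ω | ∃ v ∈ convNormal C (pfst p), ω = v + g p})
    (ω : Euc n) (hω : ∃ v ∈ convNormal C x, ω = g (pmk x u) + v)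
    (w : Euc n) (z : WithLp 2 (Euc n × Euc d))
    (hz : z ∈ coderiv F (pmk x u) ω w) :
    ∃ (γ : Fin s → ℝ) (a : Euc n) (b : Euc d),
      (∀ j, (⟪xs j, x⟫ = c j ∧ 0 < ⟪xs j, w⟫) → 0 ≤ γ j) ∧
      (∀ j, ¬(⟪xs j, x⟫ = c j ∧ 0 ≤ ⟪xs j, w⟫) → γ j = 0) ∧
      (∀ h : Euc n, ⟪a, h⟫ = ⟪w, fderiv ℝ g (pmk x u) (pmk h (0 : Euc d))⟫) ∧
      (∀ k : Euc d, ⟪b, k⟫ = ⟪w, fderiv ℝ g (pmk x u) (pmk (0 : Euc n) k)⟫) ∧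
      z = pmk (a + ∑ j, γ j • xs j) b := by
  classical
  subst hC
  obtain ⟨zk, vk, tk, yk, hzk, hvk, htk, hyk, hdist, hvt⟩ := hz
  set Ω := {q : WithLp 2 (WithLp 2 (Euc n × Euc d) × Euc n) | psnd q ∈ F (pfst q)} with hΩ
  have hmem : (pmk (pmk x u) ω : WithLp 2 (WithLp 2 (Euc n × Euc d) × Euc n)) ∈ Ω := by
    obtain ⟨v, hv, rfl⟩ := hω
    change _ ∈ F (pmk x u)
    rw [hF]
    exact ⟨v, hv, add_comm _ _⟩
  have hykt : Tendsto yk atTop (𝓝 (pmk (pmk x u) ω)) := by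
    have h0 : Tendsto (fun k => zk k - yk k) atTop (𝓝 0) := by
      rw [tendsto_zero_iff_norm_tendsto_zero]
      refine squeeze_zero (fun _ => norm_nonneg _) (fun k => ?_)
        (tendsto_iff_norm_sub_tendsto_zero.1 hzk)
      rw [hdist k, ← dist_eq_norm]
      exact Metric.infDist_le_dist_of_mem hmem
    simpa using hzk.sub h0
  have hp : Tendsto (fun k => pfst (yk k)) atTop (𝓝 (pmk x u)) :=
    (continuous_pfst.tendsto _).comp hykt
  have hpx : Tendsto (fun k => pfst (pfst (yk k))) atTop (𝓝 x) :=
    (continuous_pfst.tendsto (pmk x u)).comp hp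
  have hv1 : Tendsto (fun k => pfst (vk k)) atTop (𝓝 z) :=
    (continuous_pfst.tendsto _).comp hvk
  have hv2 : Tendsto (fun k => psnd (vk k)) atTop (𝓝 (-w)) :=
    (continuous_psnd.tendsto _).comp hvk
  have hgat : ContDiffAt ℝ 1 g (pmk x u) := hgC1.contDiffAt hV
  have hL : Tendsto (fun k => fderiv ℝ g (pfst (yk k))) atTop (𝓝 (fderiv ℝ g (pmk x u))) :=
    (hgat.continuousAt_fderiv (by norm_num)).tendsto.comp hp
  have hdiff : ∀ᶠ k in atTop, DifferentiableAt ℝ g (pfst (yk k)) := by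
    have := hgat.eventually (by simp)
    exact (hp.eventually this).mono fun k hk => hk.differentiableAt (by norm_num)
  have hact : ∀ᶠ k in atTop, ∀ j, ⟪xs j, pfst (pfst (yk k))⟫ = c j → ⟪xs j, x⟫ = c j := by
    rw [Filter.eventually_all]
    intro j
    by_cases hj : ⟪xs j, x⟫ = c j
    · exact Eventually.of_forall fun _ _ => hj
    · have : Tendsto (fun k => ⟪xs j, pfst (pfst (yk k))⟫) atTop (𝓝 ⟪xs j, x⟫) :=
        tendsto_const_nhds.inner hpx
      filter_upwards [this.eventually_ne hj] with k hk h using absurd h hk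
  have hex : ∃ IJ : Finset (Fin s) × Finset (Fin s), ∃ᶠ k in atTop, IJ.2 ⊆ IJ.1 ∧
      (∀ j ∈ IJ.1, ⟪xs j, x⟫ = c j) ∧
      (∀ j ∈ IJ.1, ⟪psnd (vk k), xs j⟫ ≤ 0) ∧
      (∀ j ∈ IJ.2, 0 ≤ ⟪psnd (vk k), xs j⟫) ∧
      (∀ l : Euc d, ⟪pfst (vk k), pmk 0 l⟫ +
        ⟪psnd (vk k), fderiv ℝ g (pfst (yk k)) (pmk 0 l)⟫ ≤ 0) ∧
      (∀ h : Euc n, (∀ j ∈ IJ.1, ⟪xs j, h⟫ ≤ 0) → (∀ j ∈ IJ.2, 0 ≤ ⟪xs j, h⟫) →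
        ⟪pfst (vk k), pmk h (0 : Euc d)⟫ +
        ⟪psnd (vk k), fderiv ℝ g (pfst (yk k)) (pmk h 0)⟫ ≤ 0) := by
    by_contra hcon
    have hcon' := Filter.eventually_all.2 fun IJ =>
      Filter.not_frequently.1 (not_exists.1 hcon IJ)
    obtain ⟨k, hk1, hk2, hk3⟩ := (hcon'.and (hdiff.and hact)).exists
    obtain ⟨IJ, p1, p2, p3⟩ := point_data xs c g F hF (zk k) (yk k) (hdist k) (tk k) (htk k)
      (hyk k) hk2
    rw [← hvt k] at p3
    exact hk1 IJ ⟨p1, fun j hj => hk3 j (p2 j hj), p3⟩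
  obtain ⟨⟨I, J⟩, hfr⟩ := hex
  dsimp only at hfr
  have hJI : J ⊆ I := by obtain ⟨k, hk⟩ := hfr.exists; exact hk.1
  have hI : ∀ j ∈ I, ⟪xs j, x⟫ = c j := by obtain ⟨k, hk⟩ := hfr.exists; exact hk.2.1
  have hw1 : ∀ j ∈ I, ⟪-w, xs j⟫ ≤ 0 := fun j hj =>
    le_of_tendsto_of_frequently (hv2.inner tendsto_const_nhds)
      (hfr.mono fun k hk => hk.2.2.1 j hj)
  have hw2 : ∀ j ∈ J, 0 ≤ ⟪-w, xs j⟫ := fun j hj =>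
    ge_of_tendsto_of_frequently (hv2.inner tendsto_const_nhds)
      (hfr.mono fun k hk => hk.2.2.2.1 j hj)
  have hlim : ∀ q : WithLp 2 (Euc n × Euc d), Tendsto (fun k => ⟪pfst (vk k), q⟫ +
      ⟪psnd (vk k), fderiv ℝ g (pfst (yk k)) q⟫) atTop
      (𝓝 (⟪z, q⟫ + ⟪-w, fderiv ℝ g (pmk x u) q⟫)) := fun q =>
    (hv1.inner tendsto_const_nhds).add (hv2.inner (((ContinuousLinearMap.apply ℝ (Euc n) q).continuous.tendsto _).comp hL))
  have hk : ∀ l : Euc d, ⟪z, pmk 0 l⟫ + ⟪-w, fderiv ℝ g (pmk x u) (pmk 0 l)⟫ ≤ 0 := fun l =>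
    le_of_tendsto_of_frequently (hlim _) (hfr.mono fun k hk => hk.2.2.2.2.1 l)
  have hh : ∀ h : Euc n, (∀ j ∈ I, ⟪xs j, h⟫ ≤ 0) → (∀ j ∈ J, 0 ≤ ⟪xs j, h⟫) →
      ⟪z, pmk h 0⟫ + ⟪-w, fderiv ℝ g (pmk x u) (pmk h 0)⟫ ≤ 0 := fun h h1 h2 =>
    le_of_tendsto_of_frequently (hlim _) (hfr.mono fun k hk => hk.2.2.2.2.2 h h1 h2)
  set L := fderiv ℝ g (pmk x u) with hLdef
  set A := ContinuousLinearMap.adjoint L w with hA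
  have hAq : ∀ q, ⟪A, q⟫ = ⟪w, L q⟫ := fun q => ContinuousLinearMap.adjoint_inner_left L q w
  have ha : ∀ h : Euc n, ⟪pfst A, h⟫ = ⟪w, L (pmk h (0 : Euc d))⟫ := fun h => by
    rw [← hAq, inner_pmk, inner_zero_right, add_zero]
  have hb : ∀ k : Euc d, ⟪psnd A, k⟫ = ⟪w, L (pmk (0 : Euc n) k)⟫ := fun k => by
    rw [← hAq, inner_pmk, inner_zero_right, zero_add]
  obtain ⟨γ, g1, g2, g3⟩ := farkas_signed I J xs (pfst z - pfst A) (by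
    intro y h1 h2
    have := hh y h1 h2
    rw [inner_pmk, inner_zero_right, add_zero, inner_neg_left, ← ha] at this
    rw [inner_sub_left]
    linarith)
  have hz2 : psnd z = psnd A := by
    rw [← sub_eq_zero, ← inner_self_eq_zero (𝕜 := ℝ)]
    have key : ∀ l : Euc d, ⟪psnd z - psnd A, l⟫ ≤ 0 := by
      intro l
      have := hk l
      rw [inner_pmk, inner_zero_right, zero_add, inner_neg_left, ← hb] at this
      rw [inner_sub_left]
      linarith
    exact le_antisymm (key _) real_inner_self_nonneg
  refine ⟨γ, pfst A, psnd A, ?_, ?_, ha, hb, ?_⟩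
  · rintro j ⟨_, hj⟩
    refine g1 j fun hJ => ?_
    have := hw2 j hJ
    rw [inner_neg_left, real_inner_comm] at this
    linarith
  · intro j hj
    have hjI : j ∉ I := fun h => hj ⟨hI j h, by
      have := hw1 j h
      rw [inner_neg_left, real_inner_comm] at this
      linarith⟩
    exact g2 j hjI fun h => hjI (hJI h)
  · rw [← g3, ← hz2, add_sub_cancel]
    rfl
end
end

section
/- Let C ⊆ ℝⁿ be the convex polyhedron determined by vectors x*_1,…,x*_s ∈ ℝⁿ and scalars c_1,…,c_s, let x ∈ C, let u ∈ ℝ^d, let g : ℝⁿ×ℝ^d → ℝⁿ be continuously differentiable on a neighborhood of (x,u), let F(x,u) := N(x;C) + g(x,u), and let ω ∈ g(x,u) + N(x;C). Assume that the vectors {x*_j : j ∈ I(x)} are linearly independent. Then for every w ∈ ℝⁿ with D*N_C(x, ω − g(x,u))(w) ≠ ∅ one has the equality D*F((x,u),ω)(w) = {(∇ₓg(x,u)ᵀ w + Σ_{j∈I₀(w)∪I_>(w)} γ_j x*_j, ∇ᵤg(x,u)ᵀ w) : γ_j ∈ ℝ for j ∈ I₀(w), γ_j ≥ 0 for j ∈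 I_>(w)}, while D*F((x,u),ω)(w) = ∅ for every w with D*N_C(x, ω − g(x,u))(w) = ∅; here I₀(w), I_>(w) are taken relative to the point x and ∇ₓg(x,u)ᵀ, ∇ᵤg(x,u)ᵀ denote the adjoints of the partial Jacobians of g at (x,u). -/
open Filter Topology Set MeasureTheory
open scoped RealInnerProductSpace

noncomputable section

section aux
variable {H : Type*} [NormedAddCommGroup H] [InnerProductSpace ℝ H]

theorem aux_prox {Ω : Set H} {z y q : H} (hz : ‖z - y‖ = Metric.infDist z Ω) (hq : q ∈ Ω)
    {t : ℝ} (ht : 0 ≤ t) : ⟪t • (z - y), q - y⟫ ≤ t / 2 * ‖q - y‖ ^ 2 := by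
  have h1 : ‖z - y‖ ≤ ‖z - q‖ := by
    rw [hz, ← dist_eq_norm]; exact Metric.infDist_le_dist_of_mem hq
  have h2 : ‖z - q‖ ^ 2 = ‖z - y‖ ^ 2 - 2 * ⟪z - y, q - y⟫ + ‖q - y‖ ^ 2 := by
    rw [← norm_sub_sq_real]; congr 2; abel
  have h3 : ‖z - y‖ ^ 2 ≤ ‖z - q‖ ^ 2 := by gcongr
  rw [real_inner_smul_left]
  nlinarith

theorem aux_curve {Ω : Set H} {z y : H} (hz : ‖z - y‖ = Metric.infDist z Ω)
    {t : ℝ} (ht : 0 ≤ t) (q : ℝ → H) (q' : H) (hq0 : q 0 = y) (hq : HasDerivAt q q' 0)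
    (hΩ : ∀ᶠ τ in 𝓝[>] (0 : ℝ), q τ ∈ Ω) : ⟪t • (z - y), q'⟫ ≤ 0 := by
  have h1 : HasDerivAt (fun τ => q τ - y) q' 0 := hq.sub_const y
  have h2 := ((hasDerivAt_const (0 : ℝ) (t • (z - y))).inner ℝ h1).sub
    (h1.norm_sq.const_mul (t / 2))
  have h3 := (hasDerivWithinAt_iff_tendsto_slope' (s := Ioi (0 : ℝ)) (by simp)).1
    h2.hasDerivWithinAt
  have h4 := le_of_tendsto (b := 0) h3 (by
    filter_upwards [hΩ, self_mem_nhdsWithin] with τ h hτ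
    have := aux_prox hz h ht
    simp only [slope, vsub_eq_sub, sub_zero, smul_eq_mul]
    have hτ' : 0 < τ := hτ
    apply mul_nonpos_of_nonneg_of_nonpos (by positivity)
    simp only [Pi.sub_apply, hq0, sub_self, inner_zero_right, norm_zero]
    norm_num
    linarith)
  simpa [hq0] using h4

theorem aux_approx [FiniteDimensional ℝ H] {Ω : Set H} {y₀ N : H} {r₀ : ℝ} (hr₀ : 0 < r₀)
    (hcl : IsClosed (Ω ∩ Metric.closedBall y₀ r₀))
    (h : ∀ δ > 0, ∃ y ∈ Ω, ‖y - y₀‖ < δ ∧ ∃ r > 0, ∀ q ∈ Ω, ‖q - y‖ < r →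
      ⟪N, q - y⟫ ≤ δ * ‖q - y‖) : N ∈ limNormal Ω y₀ := by
  have key : ∀ δ > 0, ∃ (z v : H) (t : ℝ) (y : H), ‖z - y₀‖ < δ ∧ ‖v - N‖ < δ ∧ 0 ≤ t ∧ y ∈ Ω ∧
      ‖z - y‖ = Metric.infDist z Ω ∧ v = t • (z - y) := by
    intro δ hδ
    obtain ⟨y, hy, hyd, r, hr, hN⟩ := h (min (δ / 4) (r₀ / 8)) (by positivity)
    have hyd1 := hyd.trans_le (min_le_left _ _)
    have hyd2 := hyd.trans_le (min_le_right _ _)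
    obtain ⟨τ, hτ, hτm⟩ : ∃ τ > 0, τ * ‖N‖ < min (min (δ / 4) (r₀ / 8)) (r / 4) := by
      have : 0 < min (min (δ / 4) (r₀ / 8)) (r / 4) := by positivity
      refine ⟨min (min (δ / 4) (r₀ / 8)) (r / 4) / (‖N‖ + 1), by positivity, ?_⟩
      rw [div_mul_eq_mul_div, div_lt_iff₀ (by positivity)]
      nlinarith [norm_nonneg N]
    have hτ1 := hτm.trans_le ((min_le_left _ _).trans (min_le_left _ _))
    have hτ2 := hτm.trans_le ((min_le_left _ _).trans (min_le_right _ _))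
    have hτ3 := hτm.trans_le (min_le_right _ _)
    have hzy : ‖(y + τ • N) - y‖ = τ * ‖N‖ := by
      rw [add_sub_cancel_left, norm_smul, Real.norm_of_nonneg hτ.le]
    have hzy₀ : ‖(y + τ • N) - y₀‖ ≤ ‖y - y₀‖ + τ * ‖N‖ := by
      rw [← hzy]
      calc _ = ‖(y - y₀) + ((y + τ • N) - y)‖ := by congr 1; abel
        _ ≤ _ := norm_add_le _ _
    have hcomp : IsCompact (Ω ∩ Metric.closedBall y₀ r₀) :=
      (isCompact_closedBall y₀ r₀).of_isClosed_subset hcl inter_subset_right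
    have hyB : y ∈ Ω ∩ Metric.closedBall y₀ r₀ :=
      ⟨hy, by rw [Metric.mem_closedBall, dist_eq_norm]; linarith⟩
    obtain ⟨q, hqB, hq⟩ := hcomp.exists_infDist_eq_dist ⟨y, hyB⟩ (y + τ • N)
    have hmin : ∀ p ∈ Ω, dist (y + τ • N) q ≤ dist (y + τ • N) p := by
      intro p hp
      by_cases hpB : p ∈ Metric.closedBall y₀ r₀
      · rw [← hq]; exact Metric.infDist_le_dist_of_mem ⟨hp, hpB⟩
      · have h1 : dist (y + τ • N) q ≤ dist (y + τ • N) y := by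
          rw [← hq]; exact Metric.infDist_le_dist_of_mem hyB
        rw [dist_eq_norm _ y, hzy] at h1
        rw [Metric.mem_closedBall, not_le] at hpB
        have h2 := dist_triangle_left p y₀ (y + τ • N)
        rw [dist_eq_norm (y + τ • N) y₀] at h2
        linarith
    have hqy : ‖q - y‖ ^ 2 ≤ 2 * τ * ⟪N, q - y⟫ := by
      have h1 := hmin y hy
      rw [dist_eq_norm, dist_eq_norm, hzy] at h1
      have h2 : ‖(y + τ • N) - q‖ ^ 2 = ‖τ • N‖ ^ 2 - 2 * ⟪τ • N, q - y⟫ + ‖q - y‖ ^ 2 := by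
        rw [← norm_sub_sq_real]; congr 2; abel
      have h3 : ‖(y + τ • N) - q‖ ^ 2 ≤ (τ * ‖N‖) ^ 2 := by gcongr
      rw [h2, norm_smul, Real.norm_of_nonneg hτ.le, real_inner_smul_left] at h3
      linarith
    have hqr : ‖q - y‖ < r := by
      have h1 := hmin y hy
      rw [dist_eq_norm _ y, hzy] at h1
      have h2 := dist_triangle_left q y (y + τ • N)
      rw [dist_eq_norm (y + τ • N) y, hzy, dist_eq_norm q y] at h2
      linarith
    have hqN := hN q hqB.1 hqr
    have hqN' : ⟪N, q - y⟫ ≤ δ / 4 * ‖q - y‖ :=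
      hqN.trans (by gcongr; exact min_le_left _ _)
    have hq2 : ‖q - y‖ ≤ τ * (δ / 2) := by
      by_contra hcon
      push Not at hcon
      have : 0 < ‖q - y‖ := lt_of_le_of_lt (by positivity) hcon
      nlinarith [mul_le_mul_of_nonneg_left hqN' hτ.le]
    refine ⟨y + τ • N, τ⁻¹ • ((y + τ • N) - q), τ⁻¹, q, by linarith, ?_, by positivity, hqB.1, ?_, rfl⟩
    · have : τ⁻¹ • ((y + τ • N) - q) - N = - τ⁻¹ • (q - y) := by
        rw [smul_sub, smul_add, smul_smul, inv_mul_cancel₀ hτ.ne', one_smul, neg_smul, smul_sub]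
        abel
      rw [this, norm_smul, norm_neg, norm_inv, Real.norm_of_nonneg hτ.le, inv_mul_lt_iff₀ hτ]
      nlinarith
    · rw [← dist_eq_norm]
      refine le_antisymm ((Metric.le_infDist ⟨y, hy⟩).2 fun {p} hp => hmin p hp)
        (Metric.infDist_le_dist_of_mem hqB.1)
  choose zk vk tk yk h1 h2 h3 h4 h5 h6 using
    fun k : ℕ => key (1 / ((k : ℝ) + 1)) (by positivity)
  refine ⟨zk, vk, tk, yk, ?_, ?_, h3, h4, h5, h6⟩
  · rw [tendsto_iff_norm_sub_tendsto_zero]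
    exact squeeze_zero (fun _ => norm_nonneg _) (fun k => (h1 k).le)
      tendsto_one_div_add_atTop_nhds_zero_nat
  · rw [tendsto_iff_norm_sub_tendsto_zero]
    exact squeeze_zero (fun _ => norm_nonneg _) (fun k => (h2 k).le)
      tendsto_one_div_add_atTop_nhds_zero_nat

/-- nearest points converge too -/
theorem aux_yk {Ω : Set H} {y₀ : H} (hy₀ : y₀ ∈ Ω) {zk yk : ℕ → H}
    (hz : Tendsto zk atTop (𝓝 y₀)) (h : ∀ k, ‖zk k - yk k‖ = Metric.infDist (zk k) Ω) :
    Tendsto yk atTop (𝓝 y₀) := by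
  have h1 : Tendsto (fun k => zk k - yk k) atTop (𝓝 0) := by
    rw [tendsto_zero_iff_norm_tendsto_zero]
    refine squeeze_zero (fun _ => norm_nonneg _) (fun k => ?_)
      (tendsto_iff_norm_sub_tendsto_zero.1 hz)
    rw [h k, ← dist_eq_norm]; exact Metric.infDist_le_dist_of_mem hy₀
  simpa using hz.sub h1

/-- dual vectors -/
theorem aux_dual [FiniteDimensional ℝ H] {s : ℕ} (xs : Fin s → H) (p : Fin s → Prop)
    (hLI : LinearIndependent ℝ (fun j : {j : Fin s // p j} => xs j)) :
    ∃ e : Fin s → H, (∀ j, ¬ p j → e j = 0) ∧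
      ∀ i j, p i → p j → ⟪xs i, e j⟫ = if i = j then 1 else 0 := by
  classical
  obtain ⟨L, hL⟩ := LinearMap.exists_leftInverse_of_injective _ 
    (LinearMap.ker_eq_bot.2 hLI)
  have hL' : ∀ i, L (xs i.1) = Finsupp.single i 1 := by
    intro i
    have := LinearMap.congr_fun hL (Finsupp.single i (1 : ℝ))
    simpa using this
  refine ⟨fun j => if h : p j then (InnerProductSpace.toDual ℝ H).symm
    (LinearMap.toContinuousLinearMap (Finsupp.lapply (⟨j, h⟩ : {j // p j}) ∘ₗ L)) else 0, ?_, ?_⟩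
  · intro j hj; simp [hj]
  · intro i j hi hj
    rw [real_inner_comm]
    simp only [hj, dif_pos, InnerProductSpace.toDual_symm_apply]
    have := hL' ⟨i, hi⟩
    simp only at this
    simp [this, Finsupp.single_apply]

end aux

section poly
variable {X : Type*} [NormedAddCommGroup X] [InnerProductSpace ℝ X] {s : ℕ}

structure PolyD (xs : Fin s → X) (c : Fin s → ℝ) (x : X) (e : Fin s → X) : Prop where
  hx : ∀ j, ⟪xs j, x⟫ ≤ c j
  e0 : ∀ j, ⟪xs j, x⟫ ≠ c j → e j = 0
  dual : ∀ i j, ⟪xs i, x⟫ = c i → ⟪xs j, x⟫ = c j → ⟪xs i, e j⟫ = if i = j then 1 else 0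

/-- inactive constraints at the base point stay strictly inactive -/
def Near (xs : Fin s → X) (c : Fin s → ℝ) (x y : X) : Prop :=
  ∀ j, ⟪xs j, x⟫ ≠ c j → ⟪xs j, y⟫ < c j

def PolyS (xs : Fin s → X) (c : Fin s → ℝ) : Set X := {x | ∀ j, ⟪xs j, x⟫ ≤ c j}

variable {xs : Fin s → X} {c : Fin s → ℝ} {x : X} {e : Fin s → X}

theorem PolyD.near (D : PolyD xs c x e) : ∀ᶠ y in 𝓝 x, Near xs c x y := by
  unfold Near
  rw [eventually_all]
  intro j
  by_cases h : ⟪xs j, x⟫ = c j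
  · simp [h]
  · have : ContinuousAt (fun y : X => ⟪xs j, y⟫) x := by fun_prop
    filter_upwards [this.eventually_lt_const (lt_of_le_of_ne (D.hx j) h)] with y hy _
    exact hy

theorem Near.act {y : X} (hN : Near xs c x y) {j : Fin s} (h : ⟪xs j, y⟫ = c j) :
    ⟪xs j, x⟫ = c j := by
  by_contra hc
  exact absurd h (hN j hc).ne

theorem PolyD.sum1 (D : PolyD xs c x e) (a : Fin s → ℝ) {i : Fin s} (hi : ⟪xs i, x⟫ = c i) :
    ⟪xs i, ∑ j, a j • e j⟫ = a i := by
  rw [inner_sum, Finset.sum_eq_single i]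
  · rw [real_inner_smul_right, D.dual i i hi hi]; simp
  · intro j _ hj
    rw [real_inner_smul_right]
    by_cases h : ⟪xs j, x⟫ = c j
    · rw [D.dual i j hi h, if_neg (Ne.symm hj)]; simp
    · rw [D.e0 j h]; simp
  · simp

theorem PolyD.sum2 (D : PolyD xs c x e) (b : Fin s → ℝ) (hb : ∀ j, ⟪xs j, x⟫ ≠ c j → b j = 0)
    (i : Fin s) : ⟪∑ j, b j • xs j, e i⟫ = b i := by
  by_cases hi : ⟪xs i, x⟫ = c i
  · rw [sum_inner, Finset.sum_eq_single i]
    · rw [real_inner_smul_left, D.dual i i hi hi]; simp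
    · intro j _ hj
      rw [real_inner_smul_left]
      by_cases h : ⟪xs j, x⟫ = c j
      · rw [D.dual j i h hi, if_neg hj]; simp
      · rw [hb j h]; simp
    · simp
  · rw [D.e0 i hi, hb i hi]; simp

theorem aux_dir {y h : X} (hy : ∀ j, ⟪xs j, y⟫ ≤ c j) (hh : ∀ j, ⟪xs j, y⟫ = c j → ⟪xs j, h⟫ ≤ 0) :
    ∀ᶠ τ in 𝓝[>] (0 : ℝ), ∀ j, ⟪xs j, y + τ • h⟫ ≤ c j := by
  rw [eventually_all]
  intro j
  by_cases hj : ⟪xs j, y⟫ = c j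
  · filter_upwards [self_mem_nhdsWithin] with τ hτ
    have hτ' : 0 < τ := hτ
    rw [inner_add_right, real_inner_smul_right, hj]
    nlinarith [hh j hj]
  · have h1 : ContinuousAt (fun τ : ℝ => ⟪xs j, y + τ • h⟫) 0 := by fun_prop
    have h2 := h1.eventually_lt_const (u := c j) (by simpa using lt_of_le_of_ne (hy j) hj)
    filter_upwards [nhdsWithin_le_nhds h2] with τ hτ using hτ.le

theorem normal_dir {y h μ : X} (hy : ∀ j, ⟪xs j, y⟫ ≤ c j)
    (hμ : μ ∈ convNormal (PolyS xs c) y)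
    (hh : ∀ j, ⟪xs j, y⟫ = c j → ⟪xs j, h⟫ ≤ 0) : ⟪μ, h⟫ ≤ 0 := by
  obtain ⟨τ, h1, h2⟩ := ((aux_dir hy hh).and self_mem_nhdsWithin).exists
  have hτ : 0 < τ := h2
  have := hμ.2 _ h1
  rw [add_sub_cancel_left, real_inner_smul_right] at this
  nlinarith

theorem PolyD.char (D : PolyD xs c x e) {y : X} (hy : ∀ j, ⟪xs j, y⟫ ≤ c j)
    (hN : Near xs c x y) (μ : X) :
    μ ∈ convNormal (PolyS xs c) y ↔ (∀ j, 0 ≤ ⟪μ, e j⟫) ∧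
      (∀ j, ⟪xs j, y⟫ < c j → ⟪μ, e j⟫ = 0) ∧ ∀ h, ⟪μ, h⟫ = ∑ j, ⟪μ, e j⟫ * ⟪xs j, h⟫ := by
  constructor
  · intro hμ
    have h0 : ∀ j, 0 ≤ ⟪μ, e j⟫ := by
      intro j
      have := normal_dir (h := - e j) hy hμ (by
        intro i hi
        by_cases hj : ⟪xs j, x⟫ = c j
        · rw [inner_neg_right, D.dual i j (hN.act hi) hj]; split_ifs <;> simp
        · rw [D.e0 j hj]; simp)
      rw [inner_neg_right] at this; linarith
    refine ⟨h0, ?_, ?_⟩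
    · intro j hj
      refine le_antisymm (normal_dir hy hμ ?_) (h0 j)
      intro i hi
      by_cases hj' : ⟪xs j, x⟫ = c j
      · rw [D.dual i j (hN.act hi) hj', if_neg (by rintro rfl; exact hj.ne hi)]
      · rw [D.e0 j hj']; simp
    · intro h
      have key : ∀ i, ⟪xs i, y⟫ = c i → ⟪xs i, h - ∑ j, ⟪xs j, h⟫ • e j⟫ = 0 := by
        intro i hi
        rw [inner_sub_right, D.sum1 _ (hN.act hi), sub_self]
      have h1 := normal_dir (h := h - ∑ j, ⟪xs j, h⟫ • e j) hy hμ (fun i hi => (key i hi).le)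
      have h2 := normal_dir (h := -(h - ∑ j, ⟪xs j, h⟫ • e j)) hy hμ
        (fun i hi => by rw [inner_neg_right, key i hi, neg_zero])
      rw [inner_neg_right] at h2
      have h3 : ⟪μ, h - ∑ j, ⟪xs j, h⟫ • e j⟫ = 0 := by linarith
      rw [inner_sub_right, inner_sum, sub_eq_zero] at h3
      rw [h3]
      refine Finset.sum_congr rfl fun j _ => ?_
      rw [real_inner_smul_right, mul_comm]
  · rintro ⟨h1, h2, h3⟩
    refine ⟨hy, fun z hz => ?_⟩
    rw [h3]
    refine Finset.sum_nonpos fun j _ => ?_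
    rcases (hy j).lt_or_eq with h | h
    · rw [h2 j h]; simp
    · rw [inner_sub_right, h]
      exact mul_nonpos_of_nonneg_of_nonpos (h1 j) (sub_nonpos.2 (hz j))

theorem PolyD.tan_h (D : PolyD xs c x e) {y : X} 
    (hN : Near xs c x y) {μ h : X} (hμ : μ ∈ convNormal (PolyS xs c) y)
    (h1 : ∀ j, ⟪xs j, y⟫ = c j → ⟪xs j, h⟫ ≤ 0)
    (h2 : ∀ j, ⟪xs j, y⟫ = c j → ⟪xs j, h⟫ < 0 → ⟪μ, e j⟫ = 0) :
    ∀ᶠ τ in 𝓝[>] (0 : ℝ), μ ∈ convNormal (PolyS xs c) (y + τ • h) := by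
  have hy : ∀ j, ⟪xs j, y⟫ ≤ c j := hμ.1
  obtain ⟨a1, a2, a3⟩ := (D.char hy hN μ).1 hμ
  have hnear : ∀ᶠ τ in 𝓝[>] (0 : ℝ), Near xs c x (y + τ • h) := by
    unfold Near
    rw [eventually_all]
    intro j
    by_cases hj : ⟪xs j, x⟫ = c j
    · simp [hj]
    · have h1 : ContinuousAt (fun τ : ℝ => ⟪xs j, y + τ • h⟫) 0 := by fun_prop
      have h2 := h1.eventually_lt_const (u := c j) (by simpa using hN j hj)
      filter_upwards [nhdsWithin_le_nhds h2] with τ hτ _ using hτ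
  filter_upwards [hnear, aux_dir hy h1, self_mem_nhdsWithin] with τ b1 b2 b3
  have hτ : 0 < τ := b3
  refine (D.char b2 b1 μ).2 ⟨a1, fun j hj => ?_, a3⟩
  rcases (hy j).lt_or_eq with h | h
  · exact a2 j h
  · refine h2 j h ?_
    rw [inner_add_right, h, real_inner_smul_right] at hj
    by_contra hc
    push Not at hc
    nlinarith [mul_nonneg hτ.le hc]

theorem PolyD.tan_m (D : PolyD xs c x e) {y : X} 
    (hN : Near xs c x y) {μ : X} (hμ : μ ∈ convNormal (PolyS xs c) y) {j : Fin s}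
    (hj : ⟪xs j, y⟫ = c j) {a : ℝ} (ha : 0 ≤ a ∨ 0 < ⟪μ, e j⟫) :
    ∀ᶠ τ in 𝓝[>] (0 : ℝ), μ + τ • (a • xs j) ∈ convNormal (PolyS xs c) y := by
  have hy : ∀ j, ⟪xs j, y⟫ ≤ c j := hμ.1
  obtain ⟨a1, a2, a3⟩ := (D.char hy hN μ).1 hμ
  have hpos : ∀ᶠ τ in 𝓝[>] (0 : ℝ), 0 ≤ ⟪μ, e j⟫ + τ * a := by
    rcases ha with ha | ha
    · filter_upwards [self_mem_nhdsWithin] with τ hτ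
      have hτ' : 0 < τ := hτ
      have := a1 j
      positivity
    · have h1 : ContinuousAt (fun τ : ℝ => ⟪μ, e j⟫ + τ * a) 0 := by fun_prop
      have h2 := h1.eventually_const_lt (u := 0) (by simpa using ha)
      filter_upwards [nhdsWithin_le_nhds h2] with τ hτ using hτ.le
  filter_upwards [hpos] with τ hτ
  have hxe : ∀ i, ⟪xs j, e i⟫ = if j = i then 1 else 0 := by
    intro i
    by_cases hi : ⟪xs i, x⟫ = c i
    · exact D.dual j i (hN.act hj) hi
    · rw [D.e0 i hi, if_neg (by rintro rfl; exact hi (hN.act hj))]; simp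
  refine (D.char hy hN _).2 ⟨fun i => ?_, fun i hi => ?_, fun h => ?_⟩
  · rw [inner_add_left, real_inner_smul_left, real_inner_smul_left, hxe]
    split_ifs with h
    · subst h; simpa using hτ
    · simpa using a1 i
  · rw [inner_add_left, real_inner_smul_left, real_inner_smul_left, hxe, a2 i hi,
      if_neg (by rintro rfl; exact hi.ne hj)]; simp
  · simp only [inner_add_left, real_inner_smul_left, hxe, add_mul, Finset.sum_add_distrib]
    rw [a3 h]
    simp [mul_assoc]

end poly

section coder
variable {X : Type*} [NormedAddCommGroup X] [InnerProductSpace ℝ X] {s : ℕ}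
variable {E : Type*} [NormedAddCommGroup E] [InnerProductSpace ℝ E]

theorem inner_pq (q q' : WithLp 2 (E × X)) :
    ⟪q, q'⟫ = ⟪pfst q, pfst q'⟫ + ⟪psnd q, psnd q'⟫ := WithLp.prod_inner_apply q q'

theorem cont_pfst : Continuous (pfst : WithLp 2 (E × X) → E) := WithLp.continuous_fst 2 E X
theorem cont_psnd : Continuous (psnd : WithLp 2 (E × X) → X) := WithLp.continuous_snd 2 E X
theorem cont_pmk : Continuous (fun q : E × X => pmk q.1 q.2) :=
  (WithLp.prodContinuousLinearEquiv 2 ℝ E X).symm.continuous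

theorem deriv_pmk {a : ℝ → E} {b : ℝ → X} {a' : E} {b' : X} {t : ℝ} (ha : HasDerivAt a a' t)
    (hb : HasDerivAt b b' t) : HasDerivAt (fun τ => pmk (a τ) (b τ)) (pmk a' b') t := by
  have h1 := (WithLp.prodContinuousLinearEquiv 2 ℝ E X).symm.toContinuousLinearMap.hasFDerivAt
    (x := (a t, b t))
  exact h1.comp_hasDerivAt t (ha.prodMk hb)

theorem norm_pfst_le (q : WithLp 2 (E × X)) : ‖pfst q‖ ≤ ‖q‖ := by
  have h := WithLp.prod_norm_sq_eq_of_L2 q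
  have h2 : ‖pfst q‖ ^ 2 ≤ ‖q‖ ^ 2 := by
    rw [h]; exact le_add_of_nonneg_right (sq_nonneg _)
  exact (sq_le_sq₀ (norm_nonneg _) (norm_nonneg _)).1 h2

variable {xs : Fin s → X} {c : Fin s → ℝ} {x : X} {e : Fin s → X}

/-- closedness of the graph of the normal cone map -/
theorem isClosed_gph (C : Set X) (hC : IsClosed C) :
    IsClosed {q : X × X | q.2 ∈ convNormal C q.1} := by
  have : {q : X × X | q.2 ∈ convNormal C q.1} =
      (Prod.fst ⁻¹' C) ∩ ⋂ y ∈ C, {q : X × X | ⟪q.2, y - q.1⟫ ≤ 0} := by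
    ext q; simp [convNormal]
  rw [this]
  refine (hC.preimage continuous_fst).inter (isClosed_biInter fun y _ => ?_)
  exact isClosed_le (by fun_prop) continuous_const

theorem isClosed_PolyS : IsClosed (PolyS xs c) := by
  have : PolyS xs c = ⋂ j, {y | ⟪xs j, y⟫ ≤ c j} := by ext; simp [PolyS]
  rw [this]
  exact isClosed_iInter fun j => isClosed_le (by fun_prop) continuous_const

theorem aux_upper (D : PolyD xs c x e) (P : E →L[ℝ] X) (R : X →L[ℝ] E) (hPR : ∀ y, P (R y) = y)
    {g : E → X} {p₀ : E} (hp₀ : P p₀ = x) (hg : ContDiffAt ℝ 1 g p₀) (F : E → Set X)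
    (hF : ∀ p μ, μ + g p ∈ F p ↔ μ ∈ convNormal (PolyS xs c) (P p))
    {ω : X} (hω : ω - g p₀ ∈ convNormal (PolyS xs c) x) {v : E} {w : X}
    (hv : v ∈ coderiv F p₀ ω w) :
    (∀ j, 0 < ⟪ω - g p₀, e j⟫ → ⟪xs j, w⟫ = 0) ∧ ∃ γ : Fin s → ℝ,
      (∀ j, (⟪xs j, x⟫ = c j ∧ 0 < ⟪xs j, w⟫) → 0 ≤ γ j) ∧
      (∀ j, ¬(⟪xs j, x⟫ = c j ∧ 0 ≤ ⟪xs j, w⟫) → γ j = 0) ∧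
      ∀ h : E, ⟪v, h⟫ = ⟪w, fderiv ℝ g p₀ h⟫ + ∑ j, γ j * ⟪xs j, P h⟫ := by
  subst hp₀
  obtain ⟨zk, vk, tk, yk, hz, hvk, ht, hy, hd, hvt⟩ := hv
  have hF' : ∀ p μ, μ ∈ F p ↔ μ - g p ∈ convNormal (PolyS xs c) (P p) := by
    intro p μ
    rw [← hF p (μ - g p), sub_add_cancel]
  have hyk := aux_yk (y₀ := pmk p₀ ω) (by
    show ω ∈ F p₀
    exact (hF' _ _).2 hω) hz hd
  have hp : Tendsto (fun k => pfst (yk k)) atTop (𝓝 p₀) := (cont_pfst.tendsto _).comp hyk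
  have hω' : Tendsto (fun k => psnd (yk k)) atTop (𝓝 ω) := (cont_psnd.tendsto _).comp hyk
  have ha : Tendsto (fun k => pfst (vk k)) atTop (𝓝 v) := (cont_pfst.tendsto _).comp hvk
  have hb : Tendsto (fun k => psnd (vk k)) atTop (𝓝 (-w)) := (cont_psnd.tendsto _).comp hvk
  have hgk : Tendsto (fun k => g (pfst (yk k))) atTop (𝓝 (g p₀)) := hg.continuousAt.tendsto.comp hp
  have hμ : Tendsto (fun k => psnd (yk k) - g (pfst (yk k))) atTop (𝓝 (ω - g p₀)) := hω'.sub hgk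
  have hA : Tendsto (fun k => fderiv ℝ g (pfst (yk k))) atTop (𝓝 (fderiv ℝ g p₀)) :=
    (hg.continuousAt_fderiv one_ne_zero).tendsto.comp hp
  have hdiff : ∀ᶠ k in atTop, DifferentiableAt ℝ g (pfst (yk k)) := by
    refine hp.eventually ?_
    filter_upwards [hg.eventually (by simp)] with p h using h.differentiableAt one_ne_zero
  have hnear : ∀ᶠ k in atTop, Near xs c (P p₀) (P (pfst (yk k))) :=
    ((P.continuous.tendsto p₀).comp hp).eventually D.near
  have hμk : ∀ k, psnd (yk k) - g (pfst (yk k)) ∈ convNormal (PolyS xs c) (P (pfst (yk k))) :=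
    fun k => (hF' _ _).1 (hy k)
  -- tangent inequality
  have tan : ∀ k, DifferentiableAt ℝ g (pfst (yk k)) → ∀ (h : E) (m : X),
      (∀ᶠ τ in 𝓝[>] (0 : ℝ), (psnd (yk k) - g (pfst (yk k))) + τ • m ∈
        convNormal (PolyS xs c) (P (pfst (yk k)) + τ • P h)) →
      ⟪pfst (vk k), h⟫ + ⟪psnd (vk k), m + fderiv ℝ g (pfst (yk k)) h⟫ ≤ 0 := by
    intro k hk h m hτ
    have hcur : HasDerivAt (fun τ : ℝ => pfst (yk k) + τ • h) h 0 := by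
      simpa using ((hasDerivAt_id (0 : ℝ)).smul_const h).const_add (pfst (yk k))
    have hcm : HasDerivAt (fun τ : ℝ => (psnd (yk k) - g (pfst (yk k))) + τ • m) m 0 := by
      simpa using ((hasDerivAt_id (0 : ℝ)).smul_const m).const_add
        (psnd (yk k) - g (pfst (yk k)))
    have hgc : HasDerivAt (fun τ : ℝ => g (pfst (yk k) + τ • h)) (fderiv ℝ g (pfst (yk k)) h) 0 :=
      HasFDerivAt.comp_hasDerivAt (f := fun τ : ℝ => pfst (yk k) + τ • h) (0 : ℝ)
        (by simpa using hk.hasFDerivAt) hcur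
    have := aux_curve (hd k) (ht k) _ _ (by simp; rfl) (deriv_pmk hcur (hcm.add hgc)) (by
      filter_upwards [hτ] with τ hτ
      refine (hF' _ _).2 ?_
      show (psnd (yk k) - g (pfst (yk k))) + τ • m + g (pfst (yk k) + τ • h) -
        g (pfst (yk k) + τ • h) ∈ convNormal (PolyS xs c) (P (pfst (yk k) + τ • h))
      simpa using hτ)
    rw [← hvt k, inner_pq] at this
    exact this
  have hbj : ∀ j, Tendsto (fun k => -⟪xs j, psnd (vk k)⟫) atTop (𝓝 ⟪xs j, w⟫) := by
    intro j
    have : Tendsto (fun k => -⟪xs j, psnd (vk k)⟫) atTop (𝓝 (-⟪xs j, -w⟫)) :=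
      (tendsto_const_nhds.inner hb).neg
    simpa using this
  have hl : ∀ h : E, Tendsto (fun k => ⟪pfst (vk k), h⟫ + ⟪psnd (vk k), fderiv ℝ g (pfst (yk k)) h⟫)
      atTop (𝓝 (⟪v, h⟫ - ⟪w, fderiv ℝ g p₀ h⟫)) := by
    intro h
    have h1 : Tendsto (fun k => fderiv ℝ g (pfst (yk k)) h) atTop (𝓝 (fderiv ℝ g p₀ h)) :=
      ((ContinuousLinearMap.apply ℝ X h).continuous.tendsto _).comp hA
    have := (ha.inner (𝕜 := ℝ) (tendsto_const_nhds (x := h))).add (hb.inner (𝕜 := ℝ) h1)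
    simpa [sub_eq_add_neg] using this
  have tanh : ∀ᶠ k in atTop, ∀ h : E,
      (∀ j, ⟪xs j, P (pfst (yk k))⟫ = c j → ⟪xs j, P h⟫ ≤ 0) →
      (∀ j, ⟪xs j, P (pfst (yk k))⟫ = c j → ⟪xs j, P h⟫ < 0 →
        ⟪psnd (yk k) - g (pfst (yk k)), e j⟫ = 0) →
      ⟪pfst (vk k), h⟫ + ⟪psnd (vk k), fderiv ℝ g (pfst (yk k)) h⟫ ≤ 0 := by
    filter_upwards [hdiff, hnear] with k hk hn h h1 h2
    have := tan k hk h 0 (by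
      filter_upwards [D.tan_h hn (hμk k) h1 h2] with τ hτ
      simpa using hτ)
    simpa using this
  have tanm : ∀ᶠ k in atTop, ∀ (j : Fin s) (a : ℝ), ⟪xs j, P (pfst (yk k))⟫ = c j →
      (0 ≤ a ∨ 0 < ⟪psnd (yk k) - g (pfst (yk k)), e j⟫) →
      0 ≤ a * -⟪xs j, psnd (vk k)⟫ := by
    filter_upwards [hdiff, hnear] with k hk hn j a h1 h2
    have := tan k hk 0 (a • xs j) (by
      filter_upwards [D.tan_m hn (hμk k) h1 h2] with τ hτ
      simpa using hτ)
    simp only [inner_zero_right, map_zero, add_zero, zero_add, real_inner_smul_right] at this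
    rw [real_inner_comm]
    linarith
  -- strictly positive multipliers
  have hpos : ∀ᶠ k in atTop, ∀ j, 0 < ⟪psnd (yk k) - g (pfst (yk k)), e j⟫ →
      -⟪xs j, psnd (vk k)⟫ = 0 := by
    filter_upwards [tanm, hnear] with k hk hn j hj
    have hact : ⟪xs j, P (pfst (yk k))⟫ = c j := by
      by_contra hc
      have := ((D.char (hμk k).1 hn _).1 (hμk k)).2.1 j (lt_of_le_of_ne ((hμk k).1 j) hc)
      linarith
    have h1 := hk j 1 hact (Or.inr hj)
    have h2 := hk j (-1) hact (Or.inr hj)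
    linarith
  have hS : ∀ j, ⟪xs j, P p₀⟫ = c j → ∀ᶠ k in atTop,
      ((⟪pfst (vk k), R (e j)⟫ + ⟪psnd (vk k), fderiv ℝ g (pfst (yk k)) (R (e j))⟫,
        -⟪xs j, psnd (vk k)⟫) : ℝ × ℝ) ∈
        ({q : ℝ × ℝ | q.1 * q.2 = 0} ∪ {q : ℝ × ℝ | 0 ≤ q.1 ∧ 0 ≤ q.2}) := by
    intro j hj
    filter_upwards [tanm, tanh, hpos, hnear] with k k1 k2 k3 k4
    have hch := (D.char (hμk k).1 k4 _).1 (hμk k)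
    have hdual : ∀ i, ⟪xs i, P (pfst (yk k))⟫ = c i → ⟪xs i, e j⟫ = if i = j then 1 else 0 :=
      fun i hi => D.dual i j (k4.act hi) hj
    by_cases hact : ⟪xs j, P (pfst (yk k))⟫ = c j
    · rcases (hch.1 j).lt_or_eq with hl | hl
      · left
        show _ * _ = (0 : ℝ)
        rw [k3 j hl, mul_zero]
      · right
        refine ⟨?_, by simpa using k1 j 1 hact (Or.inl zero_le_one)⟩
        have := k2 (-(R (e j))) (by
          intro i hi
          rw [map_neg, hPR, inner_neg_right, hdual i hi]; split_ifs <;> simp) (by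
          intro i hi
          rw [map_neg, hPR, inner_neg_right, hdual i hi]
          split_ifs with hij
          · subst hij; intro _; exact hl.symm
          · simp)
        simp only [inner_neg_right, map_neg] at this
        show (0 : ℝ) ≤ _
        linarith
    · left
      have hz : ∀ i, ⟪xs i, P (pfst (yk k))⟫ = c i → ⟪xs i, e j⟫ = 0 := by
        intro i hi
        rw [hdual i hi, if_neg (by rintro rfl; exact hact hi)]
      have h1 := k2 (R (e j)) (by
        intro i hi; rw [hPR, hz i hi]) (by intro i hi; rw [hPR, hz i hi]; simp)
      have h2 := k2 (-R (e j)) (by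
        intro i hi; rw [map_neg, hPR, inner_neg_right, hz i hi]; simp) (by
        intro i hi; rw [map_neg, hPR, inner_neg_right, hz i hi]; simp)
      simp only [inner_neg_right, map_neg] at h2
      show _ * _ = (0 : ℝ)
      rw [mul_eq_zero]; left
      linarith
  have hSlim : ∀ j, ⟪xs j, P p₀⟫ = c j →
      ((⟪v, R (e j)⟫ - ⟪w, fderiv ℝ g p₀ (R (e j))⟫, ⟪xs j, w⟫) : ℝ × ℝ) ∈
        ({q : ℝ × ℝ | q.1 * q.2 = 0} ∪ {q : ℝ × ℝ | 0 ≤ q.1 ∧ 0 ≤ q.2}) := by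
    intro j hj
    refine IsClosed.mem_of_tendsto ?_ ((hl (R (e j))).prodMk_nhds (hbj j)) (hS j hj)
    refine IsClosed.union (isClosed_eq (by fun_prop) (by fun_prop)) (IsClosed.inter ?_ ?_)
    · exact isClosed_le continuous_const continuous_fst
    · exact isClosed_le continuous_const continuous_snd
  refine ⟨fun j hj => ?_, fun j => ⟪v, R (e j)⟫ - ⟪w, fderiv ℝ g p₀ (R (e j))⟫, ?_, ?_, ?_⟩
  · have h1 : Tendsto (fun k => ⟪psnd (yk k) - g (pfst (yk k)), e j⟫) atTop
        (𝓝 ⟪ω - g p₀, e j⟫) := hμ.inner tendsto_const_nhds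
    have h2 : ∀ᶠ k in atTop, -⟪xs j, psnd (vk k)⟫ = 0 := by
      filter_upwards [h1.eventually_const_lt hj, hpos] with k k1 k2 using k2 j k1
    exact tendsto_nhds_unique (hbj j) ((tendsto_congr' h2).2 tendsto_const_nhds)
  · rintro j ⟨hj, hw⟩
    rcases hSlim j hj with h | h
    · rcases mul_eq_zero.1 h with h | h
      · exact h.ge
      · exact absurd h hw.ne'
    · exact h.1
  · intro j hj
    by_cases hact : ⟪xs j, P p₀⟫ = c j
    · have hw : ⟪xs j, w⟫ < 0 := by
        by_contra hc; exact hj ⟨hact, not_lt.1 hc⟩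
      rcases hSlim j hact with h | h
      · rcases mul_eq_zero.1 h with h | h
        · exact h
        · exact absurd h hw.ne
      · exact absurd h.2 (not_le.2 hw)
    · simp [D.e0 j hact]
  · intro h
    have key : ∀ i, ⟪xs i, P p₀⟫ = c i →
        ⟪xs i, P (h - ∑ j, ⟪xs j, P h⟫ • R (e j))⟫ = 0 := by
      intro i hi
      simp only [map_sub, map_sum, map_smul, hPR]
      rw [inner_sub_right, D.sum1 _ hi, sub_self]
    have h1 : ⟪v, h - ∑ j, ⟪xs j, P h⟫ • R (e j)⟫ -
        ⟪w, fderiv ℝ g p₀ (h - ∑ j, ⟪xs j, P h⟫ • R (e j))⟫ ≤ 0 := by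
      refine le_of_tendsto (hl _) ?_
      filter_upwards [tanh, hnear] with k k1 k2
      refine k1 _ (fun j hj => (key j (k2.act hj)).le) (fun j hj hlt => ?_)
      rw [key j (k2.act hj)] at hlt
      exact absurd hlt (lt_irrefl _)
    have h2 : ⟪v, -(h - ∑ j, ⟪xs j, P h⟫ • R (e j))⟫ -
        ⟪w, fderiv ℝ g p₀ (-(h - ∑ j, ⟪xs j, P h⟫ • R (e j)))⟫ ≤ 0 := by
      refine le_of_tendsto (hl _) ?_
      filter_upwards [tanh, hnear] with k k1 k2
      refine k1 _ (fun j hj => ?_) (fun j hj hlt => ?_)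
      · rw [map_neg, inner_neg_right, key j (k2.act hj), neg_zero]
      · rw [map_neg, inner_neg_right, key j (k2.act hj), neg_zero] at hlt
        exact absurd hlt (lt_irrefl _)
    simp only [map_neg, inner_neg_right] at h2
    have h3 : ⟪v, h - ∑ j, ⟪xs j, P h⟫ • R (e j)⟫ -
        ⟪w, fderiv ℝ g p₀ (h - ∑ j, ⟪xs j, P h⟫ • R (e j))⟫ = 0 := by linarith
    simp only [map_sub, map_sum, map_smul, inner_sub_right, inner_sum,
      real_inner_smul_right] at h3
    have h4 : ∑ j, (⟪v, R (e j)⟫ - ⟪w, fderiv ℝ g p₀ (R (e j))⟫) * ⟪xs j, P h⟫ =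
        ∑ j, ⟪xs j, P h⟫ * ⟪v, R (e j)⟫ - ∑ j, ⟪xs j, P h⟫ * ⟪w, fderiv ℝ g p₀ (R (e j))⟫ := by
      rw [← Finset.sum_sub_distrib]
      exact Finset.sum_congr rfl fun j _ => by ring
    rw [h4]
    linarith

theorem aux_lower [FiniteDimensional ℝ E] [FiniteDimensional ℝ X]
    (D : PolyD xs c x e) (P : E →L[ℝ] X) (R : X →L[ℝ] E) (hPR : ∀ y, P (R y) = y)
    {g : E → X} {p₀ : E} (hp₀ : P p₀ = x) (hg : ContDiffAt ℝ 1 g p₀) (F : E → Set X)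
    (hF : ∀ p μ, μ + g p ∈ F p ↔ μ ∈ convNormal (PolyS xs c) (P p))
    {ω : X} (hω : ω - g p₀ ∈ convNormal (PolyS xs c) x) {v : E} {w : X}
    (hK : ∀ j, 0 < ⟪ω - g p₀, e j⟫ → ⟪xs j, w⟫ = 0) (γ : Fin s → ℝ)
    (hγ1 : ∀ j, (⟪xs j, x⟫ = c j ∧ 0 < ⟪xs j, w⟫) → 0 ≤ γ j)
    (hγ2 : ∀ j, ¬(⟪xs j, x⟫ = c j ∧ 0 ≤ ⟪xs j, w⟫) → γ j = 0)
    (hv : ∀ h : E, ⟪v, h⟫ = ⟪w, fderiv ℝ g p₀ h⟫ + ∑ j, γ j * ⟪xs j, P h⟫) :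
    v ∈ coderiv F p₀ ω w := by
  classical
  subst hp₀
  have hF' : ∀ p μ, μ ∈ F p ↔ μ - g p ∈ convNormal (PolyS xs c) (P p) := by
    intro p μ
    rw [← hF p (μ - g p), sub_add_cancel]
  have hgev : ∀ᶠ p in 𝓝 p₀, ContDiffAt ℝ 1 g p := hg.eventually (by simp)
  have hch := (D.char D.hx (fun j hj => lt_of_le_of_ne (D.hx j) hj) _).1 hω
  -- local closedness
  obtain ⟨r₀, hr₀, hcl⟩ : ∃ r₀ > 0, IsClosed ({q : WithLp 2 (E × X) | psnd q ∈ F (pfst q)} ∩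
      Metric.closedBall (pmk p₀ ω) r₀) := by
    have h1 : ∀ᶠ q in 𝓝 (pmk p₀ ω : WithLp 2 (E × X)), ContDiffAt ℝ 1 g (pfst q) :=
      (cont_pfst.tendsto (pmk p₀ ω)).eventually hgev
    obtain ⟨r, hr, hb⟩ := Metric.eventually_nhds_iff_ball.1 h1
    refine ⟨r / 2, by positivity, ?_⟩
    have hcont : ContinuousOn (fun q : WithLp 2 (E × X) => (P (pfst q), psnd q - g (pfst q)))
        (Metric.closedBall (pmk p₀ ω) (r / 2)) := by
      intro q hq
      have hq' : q ∈ Metric.ball (pmk p₀ ω) r := by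
        rw [Metric.mem_ball]; rw [Metric.mem_closedBall] at hq; linarith
      have hgq : ContinuousAt (fun q : WithLp 2 (E × X) => g (pfst q)) q :=
        ContinuousAt.comp (f := pfst) (hb q hq').continuousAt cont_pfst.continuousAt
      exact ((P.continuous.comp cont_pfst).continuousAt.prodMk
        (cont_psnd.continuousAt.sub hgq)).continuousWithinAt
    have := hcont.preimage_isClosed_of_isClosed Metric.isClosed_closedBall
      (isClosed_gph (PolyS xs c) isClosed_PolyS)
    convert this using 1
    rw [inter_comm]
    congr 1
    ext q
    exact hF' _ _
  refine aux_approx hr₀ hcl ?_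
  intro δ hδ
  set a : Fin s → ℝ := fun j => if ⟪xs j, P p₀⟫ = c j ∧ ⟪xs j, w⟫ < 0 then 1 else 0 with ha
  set b : Fin s → ℝ := fun j => if ⟪xs j, P p₀⟫ = c j ∧ ⟪xs j, w⟫ = 0 then 1 else 0 with hb
  set pe : ℝ → E := fun ε => p₀ - ε • R (∑ j, a j • e j) with hpe
  set me : ℝ → X := fun ε => (ω - g p₀) + ε • ∑ j, b j • xs j with hme
  have hb0 : ∀ j, ⟪xs j, P p₀⟫ ≠ c j → b j = 0 := by
    intro j hj; simp [hb, hj]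
  have hpe1 : ∀ ε j, ⟪xs j, P p₀⟫ = c j → ⟪xs j, P (pe ε)⟫ = c j - ε * a j := by
    intro ε j hj
    simp only [hpe, map_sub, map_smul, hPR]
    rw [inner_sub_right, real_inner_smul_right, D.sum1 _ hj, hj]
  have hme1 : ∀ ε j, ⟪me ε, e j⟫ = ⟪ω - g p₀, e j⟫ + ε * b j := by
    intro ε j
    simp only [hme]
    rw [inner_add_left, real_inner_smul_left, D.sum2 _ hb0]
  have hpec : Continuous pe := by fun_prop
  have hmec : Continuous me := by fun_prop
  have hpe0 : pe 0 = p₀ := by simp [hpe]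
  have hme0 : me 0 = ω - g p₀ := by simp [hme]
  have hpt : Tendsto pe (𝓝[>] 0) (𝓝 p₀) := by
    have := hpec.tendsto 0
    rw [hpe0] at this
    exact this.mono_left nhdsWithin_le_nhds
  have hmt : Tendsto me (𝓝[>] 0) (𝓝 (ω - g p₀)) := by
    have := hmec.tendsto 0
    rw [hme0] at this
    exact this.mono_left nhdsWithin_le_nhds
  have hgt : Tendsto (fun ε => g (pe ε)) (𝓝[>] 0) (𝓝 (g p₀)) := hg.continuousAt.tendsto.comp hpt
  have hyt : Tendsto (fun ε => (pmk (pe ε) (me ε + g (pe ε)) : WithLp 2 (E × X))) (𝓝[>] 0)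
      (𝓝 (pmk p₀ ω)) := by
    have h1 := hpt.prodMk_nhds (hmt.add hgt)
    rw [sub_add_cancel] at h1
    exact (cont_pmk.tendsto (p₀, ω)).comp h1
  have e1 : ∀ᶠ ε in 𝓝[>] (0 : ℝ), ‖(pmk (pe ε) (me ε + g (pe ε)) : WithLp 2 (E × X)) - pmk p₀ ω‖ < δ :=
    (tendsto_iff_norm_sub_tendsto_zero.1 hyt).eventually_lt_const hδ
  have e2 : ∀ᶠ ε in 𝓝[>] (0 : ℝ), Near xs c (P p₀) (P (pe ε)) :=
    ((P.continuous.tendsto p₀).comp hpt).eventually D.near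
  have e3 : ∀ᶠ ε in 𝓝[>] (0 : ℝ), ContDiffAt ℝ 1 g (pe ε) := hpt.eventually hgev
  have hstr := (hg.hasStrictFDerivAt one_ne_zero).isLittleO.def
    (c := δ / (‖w‖ + 1)) (by positivity)
  have e4 : ∀ᶠ ε in 𝓝[>] (0 : ℝ), ∀ᶠ pp in 𝓝 (pe ε, pe ε),
      ‖g pp.1 - g pp.2 - fderiv ℝ g p₀ (pp.1 - pp.2)‖ ≤ δ / (‖w‖ + 1) * ‖pp.1 - pp.2‖ :=
    (hpt.prodMk_nhds hpt).eventually hstr.eventually_nhds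
  obtain ⟨ε, e1, e2, e3, e4, hε⟩ :=
    (e1.and (e2.and (e3.and (e4.and self_mem_nhdsWithin)))).exists
  have hε : 0 < ε := hε
  have ha0 : ∀ j, 0 ≤ a j := fun j => by simp only [ha]; split_ifs <;> simp
  have hb0' : ∀ j, 0 ≤ b j := fun j => by simp only [hb]; split_ifs <;> simp
  have hyC : ∀ j, ⟪xs j, P (pe ε)⟫ ≤ c j := by
    intro j
    by_cases hj : ⟪xs j, P p₀⟫ = c j
    · rw [hpe1 ε j hj]; nlinarith [ha0 j]
    · exact (e2 j hj).le
  have hmem : me ε ∈ convNormal (PolyS xs c) (P (pe ε)) := by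
    refine (D.char hyC e2 _).2 ⟨fun j => ?_, fun j hj => ?_, fun h => ?_⟩
    · rw [hme1]; have := hch.1 j; have := hb0' j; positivity
    · rw [hme1]
      by_cases hact : ⟪xs j, P p₀⟫ = c j
      · rw [hpe1 ε j hact] at hj
        have hw : ⟪xs j, w⟫ < 0 := by
          by_contra hc
          have : a j = 0 := by simp only [ha]; rw [if_neg (fun h => hc h.2)]
          rw [this] at hj; simp at hj
        have h1 : b j = 0 := by simp only [hb]; rw [if_neg (fun h => hw.ne h.2)]
        have h2 : ⟪ω - g p₀, e j⟫ = 0 := by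
          by_contra hc
          exact hw.ne (hK j (lt_of_le_of_ne (hch.1 j) (Ne.symm hc)))
        rw [h1, h2]; simp
      · rw [D.e0 j hact, hb0 j hact]; simp
    · have h1 := hch.2.2 h
      simp only [hme1, add_mul, Finset.sum_add_distrib]
      rw [← h1]
      simp only [hme]
      rw [inner_add_left, real_inner_smul_left, sum_inner, Finset.mul_sum]
      congr 1
      exact Finset.sum_congr rfl fun j _ => by rw [real_inner_smul_left]; ring
  refine ⟨pmk (pe ε) (me ε + g (pe ε)), ?_, e1, ?_⟩
  · exact (hF _ _).2 hmem
  -- neighbourhood conditions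
  have hcP : ContinuousAt (pfst : WithLp 2 (E × X) → E) (pmk (pe ε) (me ε + g (pe ε))) :=
    cont_pfst.continuousAt
  have hcPP : ContinuousAt (fun q : WithLp 2 (E × X) => P (pfst q))
    (pmk (pe ε) (me ε + g (pe ε))) := (P.continuous.comp cont_pfst).continuousAt
  have hcg : ContinuousAt (fun q : WithLp 2 (E × X) => g (pfst q))
      (pmk (pe ε) (me ε + g (pe ε))) :=
    ContinuousAt.comp (f := pfst) (x := (pmk (pe ε) (me ε + g (pe ε)) : WithLp 2 (E × X)))
      (g := g) e3.continuousAt cont_pfst.continuousAt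
  have n1 : ∀ᶠ q in 𝓝 (pmk (pe ε) (me ε + g (pe ε)) : WithLp 2 (E × X)),
      ∀ j, 0 < ⟪me ε, e j⟫ → 0 < ⟪psnd q - g (pfst q), e j⟫ := by
    rw [eventually_all]
    intro j
    by_cases hj : 0 < ⟪me ε, e j⟫
    · have h1 : ContinuousAt (fun q : WithLp 2 (E × X) => ⟪psnd q - g (pfst q), e j⟫)
          (pmk (pe ε) (me ε + g (pe ε))) :=
        (cont_psnd.continuousAt.sub hcg).inner continuousAt_const
      have h2 : 0 < ⟪psnd (pmk (pe ε) (me ε + g (pe ε)) : WithLp 2 (E × X)) -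
          g (pfst (pmk (pe ε) (me ε + g (pe ε)) : WithLp 2 (E × X))), e j⟫ := by
        show 0 < ⟪me ε + g (pe ε) - g (pe ε), e j⟫
        simpa using hj
      filter_upwards [Tendsto.eventually_const_lt h2 h1] with q hq _ using hq
    · exact Eventually.of_forall fun q h => absurd h hj
  have n2 : ∀ᶠ q in 𝓝 (pmk (pe ε) (me ε + g (pe ε)) : WithLp 2 (E × X)),
      ∀ j, ⟪xs j, P (pe ε)⟫ < c j → ⟪xs j, P (pfst q)⟫ < c j := by
    rw [eventually_all]
    intro j
    by_cases hj : ⟪xs j, P (pe ε)⟫ < c j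
    · have h1 : ContinuousAt (fun q : WithLp 2 (E × X) => ⟪xs j, P (pfst q)⟫)
          (pmk (pe ε) (me ε + g (pe ε))) := continuousAt_const.inner hcPP
      filter_upwards [Tendsto.eventually_lt_const (f := fun q : WithLp 2 (E × X) => ⟪xs j, P (pfst q)⟫) hj h1] with q hq _ using hq
    · exact Eventually.of_forall fun q h => absurd h hj
  have n3 : ∀ᶠ q in 𝓝 (pmk (pe ε) (me ε + g (pe ε)) : WithLp 2 (E × X)),
      ‖g (pfst q) - g (pe ε) - fderiv ℝ g p₀ (pfst q - pe ε)‖ ≤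
        δ / (‖w‖ + 1) * ‖pfst q - pe ε‖ := by
    have h1 : Tendsto (fun q : WithLp 2 (E × X) => (pfst q, pe ε))
        (𝓝 (pmk (pe ε) (me ε + g (pe ε)))) (𝓝 (pe ε, pe ε)) :=
      hcP.tendsto.prodMk_nhds tendsto_const_nhds
    exact h1.eventually e4
  obtain ⟨r, hr, hball⟩ := Metric.eventually_nhds_iff_ball.1 (n1.and (n2.and n3))
  refine ⟨r, hr, fun q hq hqr => ?_⟩
  obtain ⟨m1, m2, m3⟩ := hball q (by rw [Metric.mem_ball, dist_eq_norm]; exact hqr)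
  set μ := psnd q - g (pfst q) with hμdef
  have hμ : μ ∈ convNormal (PolyS xs c) (P (pfst q)) := (hF' _ _).1 hq
  have hqn : Near xs c (P p₀) (P (pfst q)) := fun j hj => m2 j (e2 j hj)
  have hqc := (D.char hμ.1 hqn _).1 hμ
  have hec := (D.char hyC e2 _).1 hmem
  have bracket : ∑ j, γ j * ⟪xs j, P (pfst q - pe ε)⟫ ≤ ⟪w, μ - me ε⟫ := by
    rw [real_inner_comm, inner_sub_left, hqc.2.2 w, hec.2.2 w, ← Finset.sum_sub_distrib]
    refine Finset.sum_le_sum fun j _ => ?_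
    rw [map_sub, inner_sub_right, ← sub_mul]
    by_cases hact : ⟪xs j, P p₀⟫ = c j
    · rcases lt_trichotomy ⟪xs j, w⟫ 0 with hw | hw | hw
      · have hg0 : γ j = 0 := hγ2 j (fun h => absurd h.2 (not_le.2 hw))
        have h1 : ⟪xs j, P (pe ε)⟫ < c j := by
          rw [hpe1 ε j hact]
          have : a j = 1 := by simp only [ha]; rw [if_pos ⟨hact, hw⟩]
          rw [this]; linarith
        rw [hg0, hqc.2.1 j (m2 j h1), hec.2.1 j h1]; simp
      · have h1 : 0 < ⟪me ε, e j⟫ := by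
          rw [hme1]
          have : b j = 1 := by simp only [hb]; rw [if_pos ⟨hact, hw⟩]
          rw [this]; linarith [hch.1 j]
        have h2 := m1 j h1
        have h3 : ⟪xs j, P (pfst q)⟫ = c j := by
          by_contra hc
          exact h2.ne' (hqc.2.1 j (lt_of_le_of_ne (hμ.1 j) hc))
        have h4 : ⟪xs j, P (pe ε)⟫ = c j := by
          by_contra hc
          exact h1.ne' (hec.2.1 j (lt_of_le_of_ne (hyC j) hc))
        rw [h3, h4, hw]; simp
      · have hg0 := hγ1 j ⟨hact, hw⟩
        have h1 : ⟪xs j, P (pe ε)⟫ = c j := by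
          rw [hpe1 ε j hact]
          have : a j = 0 := by simp only [ha]; rw [if_neg (fun h => absurd h.2 hw.not_gt)]
          rw [this]; simp
        have h2 : ⟪me ε, e j⟫ = 0 := by
          rw [hme1]
          have h3 : b j = 0 := by simp only [hb]; rw [if_neg (fun h => hw.ne' h.2)]
          have h4 : ⟪ω - g p₀, e j⟫ = 0 := by
            by_contra hc
            exact hw.ne' (hK j (lt_of_le_of_ne (hch.1 j) (Ne.symm hc)))
          rw [h3, h4]; simp
        rw [h1, h2]
        have h5 : ⟪xs j, P (pfst q)⟫ ≤ c j := hμ.1 j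
        have h6 := hqc.1 j
        have h7 : γ j * (⟪xs j, P (pfst q)⟫ - c j) ≤ 0 :=
          mul_nonpos_of_nonneg_of_nonpos hg0 (sub_nonpos.2 h5)
        have h8 : 0 ≤ (⟪μ, e j⟫ - 0) * ⟪xs j, w⟫ := by rw [sub_zero]; positivity
        linarith
    · rw [hγ2 j (fun h => hact h.1), D.e0 j hact]; simp
  rw [inner_pq]
  show ⟪v, pfst q - pe ε⟫ + ⟪-w, psnd q - (me ε + g (pe ε))⟫ ≤ _
  rw [hv]
  have hdecomp : psnd q - (me ε + g (pe ε)) = (μ - me ε) +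
      (g (pfst q) - g (pe ε) - fderiv ℝ g p₀ (pfst q - pe ε)) + fderiv ℝ g p₀ (pfst q - pe ε) := by
    rw [hμdef]; abel
  rw [hdecomp, inner_add_right, inner_add_right, inner_neg_left, inner_neg_left, inner_neg_left]
  have hcs : -⟪w, g (pfst q) - g (pe ε) - fderiv ℝ g p₀ (pfst q - pe ε)⟫ ≤
      ‖w‖ * (δ / (‖w‖ + 1) * ‖pfst q - pe ε‖) := by
    refine (neg_le_abs _).trans ((abs_real_inner_le_norm _ _).trans ?_)
    gcongr
  have hn : ‖pfst q - pe ε‖ ≤ ‖q - pmk (pe ε) (me ε + g (pe ε))‖ :=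
    norm_pfst_le (q - pmk (pe ε) (me ε + g (pe ε)))
  have hfin : ‖w‖ * (δ / (‖w‖ + 1) * ‖pfst q - pe ε‖) ≤
      δ * ‖q - pmk (pe ε) (me ε + g (pe ε))‖ := by
    have h1 : ‖w‖ * (δ / (‖w‖ + 1)) ≤ δ := by
      rw [mul_div_assoc', div_le_iff₀ (by positivity)]
      nlinarith [norm_nonneg w]
    rw [← mul_assoc]
    exact mul_le_mul h1 hn (norm_nonneg _) hδ.le
  linarith

end coder

/-- exact coderivative formula for `F(x,u) = N(x;C) + g(x,u)` with smooth
`g` under LICQ, together with the emptiness assertion outside the coderivative domain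
of the normal cone mapping. -/
theorem statement3 (n d s : ℕ)
    (xs : Fin s → Euc n) (c : Fin s → ℝ)
    (C : Set (Euc n)) (hC : C = {x | ∀ j, ⟪xs j, x⟫ ≤ c j})
    (x : Euc n) (hx : x ∈ C)
    (u : Euc d)
    (g : WithLp 2 (Euc n × Euc d) → Euc n)
    (V : Set (WithLp 2 (Euc n × Euc d))) (hV : V ∈ nhds (pmk x u))
    (hgC1 : ContDiffOn ℝ 1 g V)
    (F : WithLp 2 (Euc n × Euc d) → Set (Euc n))
    (hF : ∀ p, F p = {ω | ∃ v ∈ convNormal C (pfst p), ω = v + g p})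
    (ω : Euc n) (hω : ∃ v ∈ convNormal C x, ω = g (pmk x u) + v)
    (hLI : LinearIndependent ℝ (fun j : {j : Fin s // ⟪xs j, x⟫ = c j} => xs j)) :
    ∀ w : Euc n,
      ((coderiv (fun y => convNormal C y) x (ω - g (pmk x u)) w).Nonempty →
        coderiv F (pmk x u) ω w =
          {z : WithLp 2 (Euc n × Euc d) | ∃ (γ : Fin s → ℝ) (a : Euc n) (b : Euc d),
            (∀ j, (⟪xs j, x⟫ = c j ∧ 0 < ⟪xs j, w⟫) → 0 ≤ γ j) ∧
            (∀ j, ¬(⟪xs j, x⟫ = c j ∧ 0 ≤ ⟪xs j, w⟫) → γ j = 0) ∧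
            (∀ h : Euc n, ⟪a, h⟫ = ⟪w, fderiv ℝ g (pmk x u) (pmk h (0 : Euc d))⟫) ∧
            (∀ k : Euc d, ⟪b, k⟫ = ⟪w, fderiv ℝ g (pmk x u) (pmk (0 : Euc n) k)⟫) ∧
            z = pmk (a + ∑ j, γ j • xs j) b}) ∧
      (¬(coderiv (fun y => convNormal C y) x (ω - g (pmk x u)) w).Nonempty →
        coderiv F (pmk x u) ω w = ∅) := by
  subst hC
  obtain ⟨e, he0, hdual⟩ := aux_dual xs (fun j => ⟪xs j, x⟫ = c j) hLI
  have D : PolyD xs c x e := ⟨hx, he0, hdual⟩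
  have hg : ContDiffAt ℝ 1 g (pmk x u) := hgC1.contDiffAt hV
  obtain ⟨v₀, hv₀, rfl⟩ := hω
  have hω' : g (pmk x u) + v₀ - g (pmk x u) ∈ convNormal (PolyS xs c) x := by
    rw [add_sub_cancel_left]; exact hv₀
  have hF' : ∀ p μ, μ + g p ∈ F p ↔
      μ ∈ convNormal (PolyS xs c) ((WithLp.fstL 2 ℝ (Euc n) (Euc d)) p) := by
    intro p μ
    rw [hF p]
    constructor
    · rintro ⟨v, hv, h⟩
      rw [add_right_cancel h]; exact hv
    · intro h
      exact ⟨μ, h, rfl⟩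
  let R : Euc n →L[ℝ] WithLp 2 (Euc n × Euc d) :=
    (WithLp.prodContinuousLinearEquiv 2 ℝ (Euc n) (Euc d)).symm.toContinuousLinearMap.comp
      (ContinuousLinearMap.inl ℝ (Euc n) (Euc d))
  have hPR : ∀ y, (WithLp.fstL 2 ℝ (Euc n) (Euc d)) (R y) = y := fun y => rfl
  have hF0 : ∀ p μ : Euc n, μ + (0 : Euc n) ∈ convNormal (PolyS xs c) p ↔
      μ ∈ convNormal (PolyS xs c) ((ContinuousLinearMap.id ℝ (Euc n)) p) := by
    intro p μ; simp
  intro w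
  refine ⟨?_, ?_⟩
  · rintro ⟨v1, hv1⟩
    have hK := (aux_upper D (ContinuousLinearMap.id ℝ (Euc n)) (ContinuousLinearMap.id ℝ (Euc n))
      (fun _ => rfl) (g := fun _ => (0 : Euc n)) (p₀ := x) rfl contDiffAt_const
      (fun y => convNormal (PolyS xs c) y) hF0
      (ω := g (pmk x u) + v₀ - g (pmk x u)) (by simpa using hω') hv1).1
    rw [sub_zero] at hK
    ext z
    constructor
    · intro hz
      obtain ⟨-, γ, h1, h2, h3⟩ := aux_upper D (WithLp.fstL 2 ℝ (Euc n) (Euc d)) R hPR rfl hg F hF'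
        hω' hz
      refine ⟨γ, pfst z - ∑ j, γ j • xs j, psnd z, h1, h2, ?_, ?_, ?_⟩
      · intro h
        have := h3 (pmk h 0)
        rw [inner_pq] at this
        change ⟪pfst z, h⟫ + ⟪psnd z, (0 : Euc d)⟫ = _ + ∑ j, γ j * ⟪xs j, h⟫ at this
        rw [inner_zero_right, add_zero] at this
        rw [inner_sub_left, this, sum_inner]
        simp only [real_inner_smul_left]
        ring
      · intro k
        have := h3 (pmk 0 k)
        rw [inner_pq] at this
        change ⟪pfst z, (0 : Euc n)⟫ + ⟪psnd z, k⟫ = _ + ∑ j, γ j * ⟪xs j, (0 : Euc n)⟫ at this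
        simpa using this
      · rw [sub_add_cancel]; rfl
    · rintro ⟨γ, a, b, h1, h2, h3, h4, rfl⟩
      refine aux_lower D (WithLp.fstL 2 ℝ (Euc n) (Euc d)) R hPR rfl hg F hF' hω' hK γ h1 h2 ?_
      intro h
      have hs : h = pmk (pfst h) 0 + pmk 0 (psnd h) := by
        have : (pmk (pfst h) 0 + pmk 0 (psnd h) : WithLp 2 (Euc n × Euc d)) =
          pmk (pfst h + 0) (0 + psnd h) := rfl
        rw [this, add_zero, zero_add]; rfl
      rw [inner_pq]
      have hA : fderiv ℝ g (pmk x u) h = fderiv ℝ g (pmk x u) (pmk (pfst h) 0) +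
          fderiv ℝ g (pmk x u) (pmk 0 (psnd h)) := by
        rw [← map_add, ← hs]
      rw [hA, inner_add_right, ← h3, ← h4]
      change ⟪a + ∑ j, γ j • xs j, pfst h⟫ + ⟪b, psnd h⟫ = _ + ∑ j, γ j * ⟪xs j, pfst h⟫
      rw [inner_add_left, sum_inner]
      simp only [real_inner_smul_left]
      ring
  · intro hne
    rw [eq_empty_iff_forall_notMem]
    intro z hz
    apply hne
    have hK := (aux_upper D (WithLp.fstL 2 ℝ (Euc n) (Euc d)) R hPR rfl hg F hF' hω' hz).1
    refine ⟨0, ?_⟩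
    refine aux_lower D (ContinuousLinearMap.id ℝ (Euc n)) (ContinuousLinearMap.id ℝ (Euc n))
      (fun _ => rfl) (g := fun _ => (0 : Euc n)) (p₀ := x) rfl contDiffAt_const
      (fun y => convNormal (PolyS xs c) y) hF0
      (ω := g (pmk x u) + v₀ - g (pmk x u)) (by simpa using hω') (by simpa using hK)
      (fun _ => 0) (by simp) (by simp) (by simp)
end
end
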